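/- arXiv:1706.08550 — 16 statements merged into one kernel-verified Lean document; each statement's English description precedes it below -/
import Mathlib

section
/- Let A, B be m×n real matrices and let M' be an SDP1-feasible solution for the game (A,B). If M' has rank 1, then the pair (x,y) appearing in the last column of M' is a Nash equilibrium of the game (A,B). -/
open Matrix BigOperators

/-- Index type for the `(m+n+1)×(m+n+1)` SDP matrix: `m` row-player strategies,
`n` column-player strategies, plus one extra index for the last row/column. -/
abbrev SDPIdx (m n : ℕ) := (Fin m ⊕ Fin n) ⊕ Unit

variable {m n : ℕ}

/-- The vector `x` appearing in the last column of the SDP matrix. -/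
def lastX (M : Matrix (SDPIdx m n) (SDPIdx m n) ℝ) (i : Fin m) : ℝ :=
  M (Sum.inl (Sum.inl i)) (Sum.inr ())

/-- The vector `y` appearing in the last column of the SDP matrix. -/
def lastY (M : Matrix (SDPIdx m n) (SDPIdx m n) ℝ) (j : Fin n) : ℝ :=
  M (Sum.inl (Sum.inr j)) (Sum.inr ())

/-- The `m × m` block `X`. -/
def blkX (M : Matrix (SDPIdx m n) (SDPIdx m n) ℝ) (i i' : Fin m) : ℝ :=
  M (Sum.inl (Sum.inl i)) (Sum.inl (Sum.inl i'))

/-- The `n × n` block `Y`. -/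
def blkY (M : Matrix (SDPIdx m n) (SDPIdx m n) ℝ) (j j' : Fin n) : ℝ :=
  M (Sum.inl (Sum.inr j)) (Sum.inl (Sum.inr j'))

/-- The `m × n` block `P = Zᵀ`. -/
def blkP (M : Matrix (SDPIdx m n) (SDPIdx m n) ℝ) (i : Fin m) (j : Fin n) : ℝ :=
  M (Sum.inl (Sum.inl i)) (Sum.inl (Sum.inr j))

/-- The `n × m` block `Z`. -/
def blkZ (M : Matrix (SDPIdx m n) (SDPIdx m n) ℝ) (j : Fin n) (i : Fin m) : ℝ :=
  M (Sum.inl (Sum.inr j)) (Sum.inl (Sum.inl i))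

/-- The upper-left `(m+n)×(m+n)` block `M = [[X, P],[Z, Y]]` of the SDP matrix. -/
def upperBlock (M : Matrix (SDPIdx m n) (SDPIdx m n) ℝ) :
    Matrix (Fin m ⊕ Fin n) (Fin m ⊕ Fin n) ℝ :=
  Matrix.of fun a b => M (Sum.inl a) (Sum.inl b)

/-- Membership in the standard simplex `Δ_k`. -/
def InSimplex {k : ℕ} (x : Fin k → ℝ) : Prop :=
  (∀ i, 0 ≤ x i) ∧ ∑ i, x i = 1

/-- `(x,y)` is a Nash equilibrium of the bimatrix game `(A,B)`:
`x ∈ Δ_m`, `y ∈ Δ_n`, `xᵀAy ≥ (Ay)_i` for all `i`, and `xᵀBy ≥ (Bᵀx)_j` for all `j`. -/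
def IsNash (A B : Matrix (Fin m) (Fin n) ℝ) (x : Fin m → ℝ) (y : Fin n → ℝ) : Prop :=
  InSimplex x ∧ InSimplex y ∧
  (∀ i : Fin m, ∑ i', ∑ j, x i' * A i' j * y j ≥ ∑ j, A i j * y j) ∧
  (∀ j : Fin n, ∑ i, ∑ j', x i * B i j' * y j' ≥ ∑ i, B i j * x i)

/-- Feasibility for SDP1: `M'` is psd, entrywise nonnegative, has `1` in the corner,
`x` and `y` sum to one, and the relaxed Nash constraints
`Tr(AZ) ≥ (Ay)_i` and `Tr(BZ) ≥ (Bᵀx)_j` hold. -/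
def SDP1Feasible (A B : Matrix (Fin m) (Fin n) ℝ)
    (M : Matrix (SDPIdx m n) (SDPIdx m n) ℝ) : Prop :=
  M.PosSemidef ∧
  (∀ a b, 0 ≤ M a b) ∧
  M (Sum.inr ()) (Sum.inr ()) = 1 ∧
  (∑ i, lastX M i) = 1 ∧
  (∑ j, lastY M j) = 1 ∧
  (∀ i : Fin m, ∑ i', ∑ j, A i' j * blkZ M j i' ≥ ∑ j, A i j * lastY M j) ∧
  (∀ j : Fin n, ∑ i, ∑ j', B i j' * blkZ M j' i ≥ ∑ i, B i j * lastX M i)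

/-- Feasibility for SDP2: SDP1 feasibility together with the row constraints and the
correlated equilibrium constraints. -/
def SDP2Feasible (A B : Matrix (Fin m) (Fin n) ℝ)
    (M : Matrix (SDPIdx m n) (SDPIdx m n) ℝ) : Prop :=
  SDP1Feasible A B M ∧
  (∀ i : Fin m, ∑ j, blkX M i j = lastX M i) ∧
  (∀ i : Fin m, ∑ j, blkP M i j = lastX M i) ∧
  (∀ j : Fin n, ∑ j', blkY M j j' = lastY M j) ∧
  (∀ j : Fin n, ∑ i, blkZ M j i = lastY M j) ∧
  (∀ i k : Fin m, ∑ j, A i j * blkP M i j ≥ ∑ j, A k j * blkP M i j) ∧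
  (∀ j k : Fin n, ∑ i, B i j * blkP M i j ≥ ∑ i, B i k * blkP M i j)

/-- `ε_A(x,y) = max_i (Ay)_i − xᵀAy`. -/
noncomputable def epsA (A : Matrix (Fin m) (Fin n) ℝ) (x : Fin m → ℝ) (y : Fin n → ℝ) : ℝ :=
  (⨆ i : Fin m, ∑ j, A i j * y j) - ∑ i, ∑ j, x i * A i j * y j

/-- `ε_B(x,y) = max_j (Bᵀx)_j − xᵀBy`. -/
noncomputable def epsB (B : Matrix (Fin m) (Fin n) ℝ) (x : Fin m → ℝ) (y : Fin n → ℝ) : ℝ :=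
  (⨆ j : Fin n, ∑ i, B i j * x i) - ∑ i, ∑ j, x i * B i j * y j

/-- `ε(x,y) = max{ε_A(x,y), ε_B(x,y)}`. -/
noncomputable def epsNE (A B : Matrix (Fin m) (Fin n) ℝ) (x : Fin m → ℝ) (y : Fin n → ℝ) : ℝ :=
  max (epsA A x y) (epsB B x y)

/-- The `m × n` all-ones matrix `J`. -/
def allOnesM (m n : ℕ) : Matrix (Fin m) (Fin n) ℝ :=
  Matrix.of fun _ _ => (1 : ℝ)

/-- A rank-1 SDP1-feasible solution yields a Nash equilibrium in its last column. -/
theorem stmt0 (A B : Matrix (Fin m) (Fin n) ℝ)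
    (M : Matrix (SDPIdx m n) (SDPIdx m n) ℝ)
    (hfeas : SDP1Feasible A B M) (hrank : M.rank = 1) :
    IsNash A B (lastX M) (lastY M) := by
  obtain ⟨hpsd, hnn, hc, hx, hy, hA, hB⟩ := hfeas
  have hsym : ∀ a b, M a b = M b a := fun a b => by
    have := hpsd.1.apply a b
    simpa using this.symm
  have hcol : ∀ b, M *ᵥ Pi.single b 1 = fun a => M a b := fun b => by
    ext a
    simp
  have hr : Module.finrank ℝ (LinearMap.range M.mulVecLin) = 1 := hrank
  let c : SDPIdx m n → LinearMap.range M.mulVecLin :=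
    fun b => ⟨fun a => M a b, Pi.single b 1, hcol b⟩
  have hne : c (Sum.inr ()) ≠ 0 := by
    intro h
    have h1 := congrFun (congrArg Subtype.val h) (Sum.inr ())
    have h2 : M (Sum.inr ()) (Sum.inr ()) = 0 := h1
    rw [hc] at h2
    exact one_ne_zero h2
  have key : ∀ a b, M a b = M a (Sum.inr ()) * M b (Sum.inr ()) := by
    intro a b
    obtain ⟨t, ht⟩ := (finrank_eq_one_iff_of_nonzero' _ hne).1 hr (c b)
    have ht' : ∀ a, t * M a (Sum.inr ()) = M a b :=
      fun a => congrFun (congrArg Subtype.val ht) a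
    have h1 := ht' (Sum.inr ())
    rw [hc, mul_one, hsym] at h1
    rw [← ht' a, h1, mul_comm]
  have hZ : ∀ j i, blkZ M j i = lastY M j * lastX M i := fun j i => key _ _
  refine ⟨⟨fun i => hnn _ _, hx⟩, ⟨fun j => hnn _ _, hy⟩, fun i => ?_, fun j => ?_⟩
  · refine le_of_le_of_eq (hA i) ?_
    refine Finset.sum_congr rfl fun i' _ => Finset.sum_congr rfl fun j _ => ?_
    rw [hZ]; ring
  · refine le_of_le_of_eq (hB j) ?_
    refine Finset.sum_congr rfl fun i' _ => Finset.sum_congr rfl fun j _ => ?_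
    rw [hZ]; ring
end

section
/- Let A, B be m×n real matrices all of whose entries lie in the interval [0,1]. Then for any x ∈ Δ_m and y ∈ Δ_n, there exists an SDP1-feasible solution M' for the game (A,B) whose last column equals (x, y, 1). -/
open Matrix BigOperators

variable {m n : ℕ}

/-- For payoff matrices with entries in `[0,1]`, every simplex pair `(x,y)`
appears as the last column of some SDP1-feasible solution. -/
theorem stmt1 (A B : Matrix (Fin m) (Fin n) ℝ)
    (hA : ∀ i j, A i j ∈ Set.Icc (0 : ℝ) 1) (hB : ∀ i j, B i j ∈ Set.Icc (0 : ℝ) 1)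
    (x : Fin m → ℝ) (y : Fin n → ℝ) (hx : InSimplex x) (hy : InSimplex y) :
    ∃ M : Matrix (SDPIdx m n) (SDPIdx m n) ℝ,
      SDP1Feasible A B M ∧ lastX M = x ∧ lastY M = y := by
  obtain ⟨hx0, hx1⟩ := hx
  obtain ⟨hy0, hy1⟩ := hy
  have hxle : ∀ i, x i ≤ 1 := fun i => by
    rw [← hx1]; exact Finset.single_le_sum (fun k _ => hx0 k) (Finset.mem_univ i)
  have hyle : ∀ j, y j ≤ 1 := fun j => by
    rw [← hy1]; exact Finset.single_le_sum (fun k _ => hy0 k) (Finset.mem_univ j)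
  let v : SDPIdx m n → ℝ := Sum.elim (Sum.elim x y) (fun _ => 1)
  let w : SDPIdx m n → ℝ := Sum.elim (fun _ => 1) (fun _ => 0)
  have hv : ∀ a, 0 ≤ v a := by
    rintro ((i | j) | u)
    · exact hx0 i
    · exact hy0 j
    · exact zero_le_one
  have hw : ∀ a, 0 ≤ w a := by
    rintro (i | u)
    · exact zero_le_one
    · exact le_refl _
  have hX : lastX (vecMulVec v v + vecMulVec w w) = x := by
    funext i; simp [lastX, vecMulVec_apply, v, w]
  have hY : lastY (vecMulVec v v + vecMulVec w w) = y := by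
    funext i; simp [lastY, vecMulVec_apply, v, w]
  have hZ : ∀ j i, 1 ≤ blkZ (vecMulVec v v + vecMulVec w w) j i := by
    intro j i
    have := mul_nonneg (hy0 j) (hx0 i)
    simpa [blkZ, vecMulVec_apply, v, w] using this
  refine ⟨vecMulVec v v + vecMulVec w w, ⟨?_, ?_, ?_, ?_, ?_, ?_, ?_⟩, hX, hY⟩
  · have h1 := posSemidef_vecMulVec_self_star v
    have h2 := posSemidef_vecMulVec_self_star w
    simp only [star_trivial] at h1 h2
    exact h1.add h2
  · intro a b
    exact add_nonneg (mul_nonneg (hv a) (hv b)) (mul_nonneg (hw a) (hw b))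
  · simp [vecMulVec_apply, v, w]
  · rw [hX]; exact hx1
  · rw [hY]; exact hy1
  · intro i
    rw [hY]
    refine le_trans (Finset.sum_le_sum fun j _ => ?_) (Finset.single_le_sum
      (f := fun i' => ∑ j, A i' j * blkZ (vecMulVec v v + vecMulVec w w) j i')
      (fun k _ => Finset.sum_nonneg fun j _ => ?_) (Finset.mem_univ i))
    · exact mul_le_mul_of_nonneg_left ((hyle j).trans (hZ j i)) (hA i j).1
    · exact mul_nonneg (hA k j).1 (zero_le_one.trans (hZ j k))
  · intro j
    rw [hX]
    refine Finset.sum_le_sum fun i _ => ?_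
    refine le_trans ?_ (Finset.single_le_sum
      (f := fun j' => B i j' * blkZ (vecMulVec v v + vecMulVec w w) j' i)
      (fun k _ => ?_) (Finset.mem_univ j))
    · exact mul_le_mul_of_nonneg_left ((hxle i).trans (hZ j i)) (hB i j).1
    · exact mul_nonneg (hB i k).1 (zero_le_one.trans (hZ k i))
end

section
/- Let A, B be m×n real matrices and let M' be an SDP1-feasible solution for the game (A,B) of rank 1, with blocks X, Y, P = Z^T and last-column vectors x, y. Then M' satisfies the row inequalities Σ_{j=1}^m X_{ij} = x_i and Σ_{j=1}^n P_{ij} = x_i for all i ∈ {1,…,m}, and Σ_{j=1}^n Y_{ij} = y_i and Σ_{j=1}^m Z_{ij} = y_i for all i ∈ {1,…,n}; and it satisfies the correlated equilibrium inequalities Σ_{j=1}^n A_{ij} P_{ij} ≥ Σ_{j=1}^n A_{kj} P_{ij} for all i,k ∈ {1,…,m} and Σ_{j=1}^m B_{ji} P_{ji} ≥ Σ_{j=1}^m B_{jk} P_{ji} for all i,k ∈ {1,…,n}. -/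
open Matrix BigOperators

variable {m n : ℕ}

theorem aux_rank (M : Matrix (SDPIdx m n) (SDPIdx m n) ℝ) (hrank : M.rank = 1)
    (h1 : M (Sum.inr ()) (Sum.inr ()) = 1) (a b : SDPIdx m n) :
    M a b = M a (Sum.inr ()) * M (Sum.inr ()) b := by
  rw [Matrix.rank_eq_finrank_span_cols] at hrank
  have hmem : ∀ c, M.col c ∈ Submodule.span ℝ (Set.range M.col) :=
    fun c => Submodule.subset_span ⟨c, rfl⟩
  have hne : (⟨M.col (Sum.inr ()), hmem _⟩ : Submodule.span ℝ (Set.range M.col)) ≠ 0 := by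
    intro h
    have h2 := congrFun (congrArg Subtype.val h) (Sum.inr ())
    simp [Matrix.col, h1] at h2
  obtain ⟨c, hc⟩ := (finrank_eq_one_iff_of_nonzero' _ hne).1 hrank ⟨M.col b, hmem b⟩
  have hc' : ∀ a, c * M a (Sum.inr ()) = M a b := fun a =>
    congrFun (congrArg Subtype.val hc) a
  have h3 := hc' (Sum.inr ())
  rw [h1, mul_one] at h3
  rw [← hc' a, h3, mul_comm]

theorem aux_best {k : ℕ} (x f : Fin k → ℝ) (hx : ∀ i, 0 ≤ x i) (hs : ∑ i, x i = 1)
    (hf : ∀ j, f j ≤ ∑ i, x i * f i) (i j : Fin k) : x i * f j ≤ x i * f i := by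
  have h0 : ∑ l, x l * ((∑ i, x i * f i) - f l) = 0 := by
    simp only [mul_sub, Finset.sum_sub_distrib]
    rw [← Finset.sum_mul, hs, one_mul, sub_self]
  have h1 := (Finset.sum_eq_zero_iff_of_nonneg
    (fun l _ => mul_nonneg (hx l) (sub_nonneg.2 (hf l)))).1 h0 i (Finset.mem_univ i)
  have h2 := mul_le_mul_of_nonneg_left (hf j) (hx i)
  rw [mul_sub] at h1
  linarith

/-- A rank-1 SDP1-feasible solution satisfies the row inequalities and the
correlated equilibrium inequalities. -/
theorem stmt2 (A B : Matrix (Fin m) (Fin n) ℝ)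
    (M : Matrix (SDPIdx m n) (SDPIdx m n) ℝ)
    (hfeas : SDP1Feasible A B M) (hrank : M.rank = 1) :
    (∀ i : Fin m, ∑ j, blkX M i j = lastX M i) ∧
    (∀ i : Fin m, ∑ j, blkP M i j = lastX M i) ∧
    (∀ j : Fin n, ∑ j', blkY M j j' = lastY M j) ∧
    (∀ j : Fin n, ∑ i, blkZ M j i = lastY M j) ∧
    (∀ i k : Fin m, ∑ j, A i j * blkP M i j ≥ ∑ j, A k j * blkP M i j) ∧
    (∀ j k : Fin n, ∑ i, B i j * blkP M i j ≥ ∑ i, B i k * blkP M i j) := by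
  obtain ⟨hpsd, hnn, h1, hx, hy, hA, hB⟩ := hfeas
  have hsym : ∀ a b, M a b = M b a := fun a b => by
    simpa using (hpsd.isHermitian.apply a b).symm
  have key : ∀ a b, M a b = M a (Sum.inr ()) * M b (Sum.inr ()) := fun a b => by
    rw [aux_rank M hrank h1 a b, hsym (Sum.inr ()) b]
  have kX : ∀ i j, blkX M i j = lastX M i * lastX M j := fun i j => key _ _
  have kY : ∀ i j, blkY M i j = lastY M i * lastY M j := fun i j => key _ _
  have kP : ∀ i j, blkP M i j = lastX M i * lastY M j := fun i j => key _ _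
  have kZ : ∀ i j, blkZ M i j = lastY M i * lastX M j := fun i j => key _ _
  have nx : ∀ i, 0 ≤ lastX M i := fun i => hnn _ _
  have ny : ∀ i, 0 ≤ lastY M i := fun i => hnn _ _
  simp only [kX, kY, kP, kZ] at hA hB ⊢
  refine ⟨fun i => ?_, fun i => ?_, fun i => ?_, fun i => ?_, fun i k => ?_, fun i k => ?_⟩
  · rw [← Finset.mul_sum, hx, mul_one]
  · rw [← Finset.mul_sum, hy, mul_one]
  · rw [← Finset.mul_sum, hy, mul_one]
  · rw [← Finset.mul_sum, hx, mul_one]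
  · have h := aux_best (lastX M) (fun i => ∑ j, A i j * lastY M j) nx hx (fun j => by
      refine (hA j).trans_eq ?_
      simp only [Finset.mul_sum]
      exact Finset.sum_congr rfl fun _ _ => Finset.sum_congr rfl fun _ _ => by ring) i k
    simp only [Finset.mul_sum] at h
    simpa only [mul_left_comm, ge_iff_le] using h
  · have h := aux_best (lastY M) (fun j => ∑ i, B i j * lastX M i) ny hy (fun j => by
      refine (hB j).trans_eq ?_
      simp only [Finset.mul_sum]
      rw [Finset.sum_comm]
      exact Finset.sum_congr rfl fun _ _ => Finset.sum_congr rfl fun _ _ => by ring) i k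
    simp only [Finset.mul_sum] at h
    convert h using 1 <;> exact Finset.sum_congr rfl fun _ _ => by ring
end

section
/- Let A, B be m×n real matrices and let M' be an SDP2-feasible solution for the game (A,B). Let M = [[X, P],[Z, Y]] denote the upper-left (m+n)×(m+n) block of M' and let z ∈ ℝ^{m+n} be the concatenation of x and y. Then: (1) the distribution constraints hold: Σ_{i,j} X_{ij} = Σ_{i,j} Z_{ij} = Σ_{i,j} Y_{ij} = 1; and (2) the McCormick inequalities hold: M_{ij} ≤ z_i for all i,j ∈ {1,…,m+n}, and M_{ij} + 1 ≥ z_i + z_j for all i,j ∈ {1,…,m+n}. -/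
open Matrix BigOperators

variable {m n : ℕ}

theorem mcc_aux {α β : Type} [Fintype α] [Fintype β] [DecidableEq α]
    (Q : α → β → ℝ) (r : α → ℝ) (c : β → ℝ)
    (h0 : ∀ a b, 0 ≤ Q a b) (hr : ∀ a, ∑ b, Q a b = r a) (hc : ∀ b, ∑ a, Q a b = c b)
    (h1 : ∑ a, r a = 1) (a : α) (b : β) : Q a b + 1 ≥ r a + c b := by
  have hle : ∀ a, Q a b ≤ r a := fun a => by
    rw [← hr a]
    exact Finset.single_le_sum (f := fun b => Q a b) (fun i _ => h0 a i) (Finset.mem_univ b)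
  rw [← Finset.add_sum_erase _ _ (Finset.mem_univ a)] at h1
  have h2 := hc b
  rw [← Finset.add_sum_erase _ _ (Finset.mem_univ a)] at h2
  have h3 : ∑ x ∈ Finset.univ.erase a, Q x b ≤ ∑ x ∈ Finset.univ.erase a, r x :=
    Finset.sum_le_sum fun i _ => hle i
  linarith

/-- Any SDP2-feasible solution satisfies the distribution constraints and the
McCormick inequalities. -/
theorem stmt3 (A B : Matrix (Fin m) (Fin n) ℝ)
    (M : Matrix (SDPIdx m n) (SDPIdx m n) ℝ)
    (hfeas : SDP2Feasible A B M) :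
    (∑ i, ∑ j, blkX M i j = 1) ∧
    (∑ j, ∑ i, blkZ M j i = 1) ∧
    (∑ j, ∑ j', blkY M j j' = 1) ∧
    (∀ a b : Fin m ⊕ Fin n,
      upperBlock M a b ≤ Sum.elim (lastX M) (lastY M) a) ∧
    (∀ a b : Fin m ⊕ Fin n,
      upperBlock M a b + 1 ≥ Sum.elim (lastX M) (lastY M) a + Sum.elim (lastX M) (lastY M) b) := by
  obtain ⟨⟨hpsd, h0, -, hx, hy, -, -⟩, hX, hP, hY, hZ, -, -⟩ := hfeas
  have hs : ∀ a b, M a b = M b a := fun a b => by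
    simpa using (hpsd.isHermitian.apply a b).symm
  refine ⟨by simp [hX, hx], by simp [hZ, hy], by simp [hY, hy], ?_, ?_⟩
  · rintro (a | a) (b | b)
    · change blkX M a b ≤ lastX M a
      rw [← hX a]
      exact Finset.single_le_sum (f := fun b => blkX M a b) (fun i _ => h0 _ _) (Finset.mem_univ b)
    · change blkP M a b ≤ lastX M a
      rw [← hP a]
      exact Finset.single_le_sum (f := fun b => blkP M a b) (fun i _ => h0 _ _) (Finset.mem_univ b)
    · change blkZ M a b ≤ lastY M a
      rw [← hZ a]
      exact Finset.single_le_sum (f := fun b => blkZ M a b) (fun i _ => h0 _ _) (Finset.mem_univ b)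
    · change blkY M a b ≤ lastY M a
      rw [← hY a]
      exact Finset.single_le_sum (f := fun b => blkY M a b) (fun i _ => h0 _ _) (Finset.mem_univ b)
  · rintro (a | a) (b | b)
    · exact mcc_aux (blkX M) (lastX M) (lastX M) (fun _ _ => h0 _ _) hX
        (fun b => (Finset.sum_congr rfl fun i _ => hs _ _).trans (hX b)) hx a b
    · exact mcc_aux (blkP M) (lastX M) (lastY M) (fun _ _ => h0 _ _) hP
        (fun b => (Finset.sum_congr rfl fun i _ => hs _ _).trans (hZ b)) hx a b
    · exact mcc_aux (blkZ M) (lastY M) (lastX M) (fun _ _ => h0 _ _) hZ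
        (fun b => (Finset.sum_congr rfl fun i _ => hs _ _).trans (hP b)) hy a b
    · exact mcc_aux (blkY M) (lastY M) (lastY M) (fun _ _ => h0 _ _) hY
        (fun b => (Finset.sum_congr rfl fun i _ => hs _ _).trans (hY b)) hy a b
end

section
/- Let A be an m×n real matrix and consider the zero-sum game (A, −A). If M' is an SDP1-feasible solution for the game (A, −A), then the pair (x,y) from the last column of M' is a Nash equilibrium of (A, −A). -/
open Matrix BigOperators

variable {m n : ℕ}

/-- For a zero-sum game `(A, −A)`, the last column of any SDP1-feasible
solution is a Nash equilibrium. -/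
theorem stmt4 (A : Matrix (Fin m) (Fin n) ℝ)
    (M : Matrix (SDPIdx m n) (SDPIdx m n) ℝ)
    (hfeas : SDP1Feasible A (-A) M) :
    IsNash A (-A) (lastX M) (lastY M) := by
  obtain ⟨-, hnn, -, hx, hy, hA, hB⟩ := hfeas
  have hx0 : ∀ i, 0 ≤ lastX M i := fun i => hnn _ _
  have hy0 : ∀ j, 0 ≤ lastY M j := fun j => hnn _ _
  have hB' : ∀ j : Fin n, ∑ i', ∑ j, A i' j * blkZ M j i' ≤ ∑ i, A i j * lastX M i := by
    intro j
    have h := hB j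
    simp only [Matrix.neg_apply, neg_mul, Finset.sum_neg_distrib] at h
    linarith
  set T := ∑ i', ∑ j, A i' j * blkZ M j i' with hT
  have h1 : ∑ i, ∑ j, lastX M i * A i j * lastY M j ≤ T := by
    calc ∑ i, ∑ j, lastX M i * A i j * lastY M j
        = ∑ i, lastX M i * ∑ j, A i j * lastY M j := by
          simp only [Finset.mul_sum, mul_assoc]
      _ ≤ ∑ i, lastX M i * T :=
          Finset.sum_le_sum fun i _ => mul_le_mul_of_nonneg_left (hA i) (hx0 i)
      _ = T := by rw [← Finset.sum_mul, hx, one_mul]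
  have h2 : T ≤ ∑ i, ∑ j, lastX M i * A i j * lastY M j := by
    calc T = ∑ j, lastY M j * T := by rw [← Finset.sum_mul, hy, one_mul]
      _ ≤ ∑ j, lastY M j * ∑ i, A i j * lastX M i :=
          Finset.sum_le_sum fun j _ => mul_le_mul_of_nonneg_left (hB' j) (hy0 j)
      _ = ∑ i, ∑ j, lastX M i * A i j * lastY M j := by
          rw [Finset.sum_comm]
          simp only [Finset.mul_sum]
          exact Finset.sum_congr rfl fun j _ => Finset.sum_congr rfl fun i _ => by ring
  refine ⟨⟨hx0, hx⟩, ⟨hy0, hy⟩, fun i => ?_, fun j => ?_⟩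
  · have := hA i
    linarith
  · have := hB' j
    simp only [Matrix.neg_apply, neg_mul, mul_neg, Finset.sum_neg_distrib]
    linarith
end

section
/- Let A, B be m×n real matrices and let c, d, e, f be real scalars with c > 0 and e > 0. If a matrix M' is an SDP2-feasible solution for the game with payoff matrices (A, B), then M' is also an SDP2-feasible solution for the game with payoff matrices (cA + dJ, eB + fJ), where J denotes the m×n all-ones matrix. -/
open Matrix BigOperators

variable {m n : ℕ}

/-- SDP2 feasibility is invariant under positive scaling and shifting of the
payoff matrices. -/
theorem stmt5 (A B : Matrix (Fin m) (Fin n) ℝ) (c d e f : ℝ) (hc : 0 < c) (he : 0 < e)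
    (M : Matrix (SDPIdx m n) (SDPIdx m n) ℝ)
    (hfeas : SDP2Feasible A B M) :
    SDP2Feasible (c • A + d • allOnesM m n) (e • B + f • allOnesM m n) M := by
  obtain ⟨⟨h1, h2, h3, hx, hy, hA, hB⟩, r1, r2, r3, r4, cA, cB⟩ := hfeas
  have e1 : ∀ (N : Matrix (Fin m) (Fin n) ℝ) (a b : ℝ) (i : Fin m) (w : Fin n → ℝ),
      ∑ j, (a • N + b • allOnesM m n) i j * w j = a * ∑ j, N i j * w j + b * ∑ j, w j := by
    intro N a b i w
    rw [Finset.mul_sum, Finset.mul_sum, ← Finset.sum_add_distrib]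
    refine Finset.sum_congr rfl fun j _ => ?_
    simp [allOnesM]
    ring
  have e2 : ∀ (N : Matrix (Fin m) (Fin n) ℝ) (a b : ℝ) (j : Fin n) (w : Fin m → ℝ),
      ∑ i, (a • N + b • allOnesM m n) i j * w i = a * ∑ i, N i j * w i + b * ∑ i, w i := by
    intro N a b j w
    rw [Finset.mul_sum, Finset.mul_sum, ← Finset.sum_add_distrib]
    refine Finset.sum_congr rfl fun j _ => ?_
    simp [allOnesM]
    ring
  have hZ : ∑ i, ∑ j, blkZ M j i = 1 := by
    rw [Finset.sum_comm]
    simp only [r4, hy]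
  have e3 : ∀ (N : Matrix (Fin m) (Fin n) ℝ) (a b : ℝ),
      ∑ i, ∑ j, (a • N + b • allOnesM m n) i j * blkZ M j i
        = a * (∑ i, ∑ j, N i j * blkZ M j i) + b := by
    intro N a b
    have : ∀ i, ∑ j, (a • N + b • allOnesM m n) i j * blkZ M j i
        = a * ∑ j, N i j * blkZ M j i + b * ∑ j, blkZ M j i := fun i => e1 N a b i _
    simp only [this]
    rw [Finset.sum_add_distrib, ← Finset.mul_sum, ← Finset.mul_sum, hZ, mul_one]
  refine ⟨⟨h1, h2, h3, hx, hy, fun i => ?_, fun j => ?_⟩, r1, r2, r3, r4,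
    fun i k => ?_, fun j k => ?_⟩
  · rw [e3, e1 A c d i (lastY M), hy]
    have := mul_le_mul_of_nonneg_left (hA i) hc.le
    linarith
  · rw [e3, e2 B e f j (lastX M), hx]
    have := mul_le_mul_of_nonneg_left (hB j) he.le
    linarith
  · rw [e1 A c d i (blkP M i), e1 A c d k (blkP M i)]
    have := mul_le_mul_of_nonneg_left (cA i k) hc.le
    linarith
  · rw [e2 B e f j (fun i => blkP M i j), e2 B e f k (fun i => blkP M i j)]
    have := mul_le_mul_of_nonneg_left (cB j k) he.le
    linarith
end

section
/- Let A, B be m×n real matrices and suppose the game (A,B) is strictly competitive, i.e., there exist scalars c > 0, e > 0 and d, f ∈ ℝ such that cA + dJ = −eB + fJ, where J is the m×n all-ones matrix. If M' is an SDP2-feasible solution for the game (A,B), then the pair (x,y) from the last column of M' is a Nash equilibrium of (A,B). -/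
open Matrix BigOperators

variable {m n : ℕ}

/-- For a strictly competitive game, the last column of any SDP2-feasible
solution is a Nash equilibrium. -/
theorem stmt6 (A B : Matrix (Fin m) (Fin n) ℝ) (c d e f : ℝ) (hc : 0 < c) (he : 0 < e)
    (hsc : c • A + d • allOnesM m n = -(e • B) + f • allOnesM m n)
    (M : Matrix (SDPIdx m n) (SDPIdx m n) ℝ)
    (hfeas : SDP2Feasible A B M) :
    IsNash A B (lastX M) (lastY M) := by
  obtain ⟨⟨_, hnn, _, hx, hy, hA, hB⟩, _, _, _, hZ, _, _⟩ := hfeas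
  have hx0 : ∀ i, 0 ≤ lastX M i := fun i => hnn _ _
  have hy0 : ∀ j, 0 ≤ lastY M j := fun j => hnn _ _
  have key : ∀ i j, c * A i j + d = -(e * B i j) + f := by
    intro i j
    have h := congrFun (congrFun hsc i) j
    simpa [allOnesM] using h
  have lin : ∀ W : Fin m → Fin n → ℝ, ∑ i, ∑ j, W i j = 1 →
      c * (∑ i, ∑ j, A i j * W i j) + e * (∑ i, ∑ j, B i j * W i j) = f - d := by
    intro W hW
    rw [← mul_one (f - d), ← hW]
    simp only [Finset.mul_sum, ← Finset.sum_add_distrib]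
    refine Finset.sum_congr rfl fun i _ => Finset.sum_congr rfl fun j _ => ?_
    linear_combination (W i j) * key i j
  have h1 := lin (fun i j => blkZ M j i) (by
    rw [Finset.sum_comm]; simp only [hZ]; exact hy)
  have h2 := lin (fun i j => lastX M i * lastY M j) (by
    simp only [← Finset.mul_sum, hy, mul_one, hx])
  have eqA : ∀ C : Matrix (Fin m) (Fin n) ℝ, ∑ i, ∑ j, C i j * (lastX M i * lastY M j)
      = ∑ i, ∑ j, lastX M i * C i j * lastY M j := fun C =>
    Finset.sum_congr rfl fun i _ => Finset.sum_congr rfl fun j _ => by ring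
  simp only [eqA] at h1 h2
  have pa : ∑ i, ∑ j, lastX M i * A i j * lastY M j ≤ ∑ i, ∑ j, A i j * blkZ M j i := by
    calc ∑ i, ∑ j, lastX M i * A i j * lastY M j
        = ∑ i, lastX M i * ∑ j, A i j * lastY M j := by simp only [Finset.mul_sum, mul_assoc]
      _ ≤ ∑ i, lastX M i * ∑ i', ∑ j, A i' j * blkZ M j i' :=
          Finset.sum_le_sum fun i _ => mul_le_mul_of_nonneg_left (hA i) (hx0 i)
      _ = _ := by rw [← Finset.sum_mul, hx, one_mul]
  have qb : ∑ i, ∑ j, lastX M i * B i j * lastY M j ≤ ∑ i, ∑ j, B i j * blkZ M j i := by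
    calc ∑ i, ∑ j, lastX M i * B i j * lastY M j
        = ∑ j, lastY M j * ∑ i, B i j * lastX M i := by
          rw [Finset.sum_comm]
          simp only [Finset.mul_sum]
          exact Finset.sum_congr rfl fun i _ => Finset.sum_congr rfl fun j _ => by ring
      _ ≤ ∑ j, lastY M j * ∑ i', ∑ j', B i' j' * blkZ M j' i' :=
          Finset.sum_le_sum fun j _ => mul_le_mul_of_nonneg_left (hB j) (hy0 j)
      _ = _ := by rw [← Finset.sum_mul, hy, one_mul]
  refine ⟨⟨hx0, hx⟩, ⟨hy0, hy⟩, fun i => ?_, fun j => ?_⟩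
  · have := mul_le_mul_of_nonneg_left qb he.le
    have : c * (∑ i, ∑ j, A i j * blkZ M j i) ≤
      c * ∑ i, ∑ j, lastX M i * A i j * lastY M j := by linarith
    exact (hA i).le.trans (le_of_mul_le_mul_left this hc)
  · have := mul_le_mul_of_nonneg_left pa hc.le
    have : e * (∑ i, ∑ j, B i j * blkZ M j i) ≤
      e * ∑ i, ∑ j, lastX M i * B i j * lastY M j := by linarith
    exact (hB j).le.trans (le_of_mul_le_mul_left this he)
end

section
/- Let M be a symmetric (m+n)×(m+n) real matrix with block form M = [[X, P],[Z, Y]] (X ∈ ℝ^{m×m}, P ∈ ℝ^{m×n}, Z = P^T, Y ∈ ℝ^{n×n}) satisfying the distribution constraints Σ_{i,j} X_{ij} = Σ_{i,j} Z_{ij} = Σ_{i,j} Y_{ij} = 1. Suppose M = Σ_{i=1}^k λ_i v_i v_i^T where each λ_i ≥ 0 and each v_i ∈ ℝ^{m+n} is partitioned as v_i = (a_i, b_i) with a_i ∈ ℝ^m, b_i ∈ ℝ^n. Then for every i with λ_i > 0, Σ_{j=1}^m (a_i)_j = Σ_{j=1}^n (b_i)_j. -/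
open Matrix BigOperators

variable {m n : ℕ}

/-- partition lemma. If a symmetric block matrix satisfying the distribution
constraints decomposes as `M = Σ λ_i v_i v_iᵀ` with `λ_i ≥ 0`, then for every `i` with
`λ_i > 0` the two halves of `v_i` have equal coordinate sums. -/
theorem stmt8 {m n k : ℕ}
    (M : Matrix (Fin m ⊕ Fin n) (Fin m ⊕ Fin n) ℝ) (hsymm : M.IsSymm)
    (lam : Fin k → ℝ) (v : Fin k → (Fin m ⊕ Fin n) → ℝ)
    (hlam : ∀ i, 0 ≤ lam i)
    (hM : M = ∑ i, lam i • Matrix.vecMulVec (v i) (v i))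
    (hX : ∑ i, ∑ j, M (Sum.inl i) (Sum.inl j) = 1)
    (hZ : ∑ j, ∑ i, M (Sum.inr j) (Sum.inl i) = 1)
    (hY : ∑ j, ∑ j', M (Sum.inr j) (Sum.inr j') = 1) :
    ∀ i, 0 < lam i → ∑ j, v i (Sum.inl j) = ∑ j, v i (Sum.inr j) := by
  have key : ∀ {p q : ℕ} (f : Fin p → Fin m ⊕ Fin n) (g : Fin q → Fin m ⊕ Fin n),
      ∑ i, ∑ j, M (f i) (g j)
        = ∑ t, lam t * ((∑ i, v t (f i)) * (∑ j, v t (g j))) := by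
    intro p q f g
    have h1 : ∀ a b, M a b = ∑ t, lam t * (v t a * v t b) := by
      intro a b
      rw [hM, Matrix.sum_apply]
      simp [Matrix.vecMulVec_apply]
    simp only [h1, Finset.sum_mul_sum]
    simp only [Finset.mul_sum]
    rw [Finset.sum_congr rfl (fun i _ => Finset.sum_comm)]
    rw [Finset.sum_comm]
  rw [key Sum.inl Sum.inl] at hX
  rw [key Sum.inr Sum.inl] at hZ
  rw [key Sum.inr Sum.inr] at hY
  have h0 : ∑ t, lam t * (∑ j, v t (Sum.inl j) - ∑ j, v t (Sum.inr j)) ^ 2 = 0 := by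
    have : ∀ t, lam t * (∑ j, v t (Sum.inl j) - ∑ j, v t (Sum.inr j)) ^ 2
        = lam t * ((∑ j, v t (Sum.inl j)) * (∑ j, v t (Sum.inl j)))
          - 2 * (lam t * ((∑ j, v t (Sum.inr j)) * (∑ j, v t (Sum.inl j))))
          + lam t * ((∑ j, v t (Sum.inr j)) * (∑ j, v t (Sum.inr j))) := by
      intro t; ring
    simp only [this, Finset.sum_add_distrib, Finset.sum_sub_distrib, ← Finset.mul_sum] at *
    rw [hX, hZ, hY]; norm_num
  intro i hi
  have h2 := (Finset.sum_eq_zero_iff_of_nonneg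
    (fun t _ => mul_nonneg (hlam t) (sq_nonneg _))).1 h0 i (Finset.mem_univ i)
  have h3 := (mul_eq_zero.1 h2).resolve_left hi.ne'
  exact sub_eq_zero.1 (pow_eq_zero_iff (two_ne_zero) |>.1 h3)
end

section
/- Let k ≥ 1 and let a_1,…,a_k ∈ ℝ^m, b_1,…,b_k ∈ ℝ^n, and λ_1,…,λ_k, s_1,…,s_k ∈ ℝ satisfy Σ_{i=1}^k λ_i s_i^2 = 1. Define P = Σ_{i=1}^k λ_i a_i b_i^T, x = Σ_{i=1}^k λ_i s_i a_i, and y = Σ_{i=1}^k λ_i s_i b_i. Then P − x y^T = Σ_{1 ≤ i < j ≤ k} λ_i λ_j (s_j a_i − s_i a_j)(s_j b_i − s_i b_j)^T. -/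
open Matrix BigOperators

variable {m n : ℕ}

lemma stmt9_scalar {k : ℕ} (p q l s : Fin k → ℝ) (hs : ∑ i, l i * (s i) ^ 2 = 1) :
    (∑ i, l i * (p i * q i)) - (∑ i, l i * s i * p i) * (∑ i, l i * s i * q i) =
    ∑ i : Fin k, ∑ j ∈ Finset.univ.filter (fun j => i < j),
      (l i * l j) * ((s j * p i - s i * p j) * (s j * q i - s i * q j)) := by
  set f : Fin k → Fin k → ℝ := fun i j =>
    (l i * l j) * ((s j * p i - s i * p j) * (s j * q i - s i * q j)) with hf
  change _ = ∑ i : Fin k, ∑ j ∈ Finset.univ.filter (fun j => i < j), f i j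
  have h1 : ∑ i, ∑ j, f i j = 2 * ∑ i : Fin k, ∑ j ∈ Finset.univ.filter (fun j => i < j), f i j := by
    have hsplit : ∀ i j, f i j = (if i < j then f i j else 0) + (if j < i then f j i else 0) := by
      intro i j
      rcases lt_trichotomy i j with h | h | h
      · simp [h, h.not_gt]
      · subst h; simp [hf]
      · simp only [h, h.not_gt, if_true, if_false, hf]; ring
    simp only [Finset.sum_filter]
    rw [two_mul]
    conv_rhs => rw [Finset.sum_comm (f := fun i j => if i < j then f i j else 0)]
    conv_rhs => arg 1; rw [Finset.sum_comm]
    simp only [← Finset.sum_add_distrib]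
    exact Finset.sum_congr rfl fun i _ => Finset.sum_congr rfl fun j _ => hsplit i j
  have h2 : ∑ i, ∑ j, f i j = (∑ i, l i * (p i * q i)) * (∑ j, l j * s j ^ 2)
      + (∑ i, l i * s i ^ 2) * (∑ j, l j * (p j * q j))
      - (∑ i, l i * s i * p i) * (∑ j, l j * s j * q j)
      - (∑ i, l i * s i * q i) * (∑ j, l j * s j * p j) := by
    simp only [Finset.sum_mul_sum, ← Finset.sum_add_distrib, ← Finset.sum_sub_distrib]
    refine Finset.sum_congr rfl fun i _ => Finset.sum_congr rfl fun j _ => ?_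
    simp only [hf]; ring
  rw [hs] at h2
  linarith

/-- representation lemma for `P − xyᵀ`. -/
theorem stmt9 {m n k : ℕ} (hk : 1 ≤ k)
    (a : Fin k → Fin m → ℝ) (b : Fin k → Fin n → ℝ)
    (lam s : Fin k → ℝ) (hs : ∑ i, lam i * (s i) ^ 2 = 1) :
    (∑ i, lam i • Matrix.vecMulVec (a i) (b i)) -
      Matrix.vecMulVec (∑ i, (lam i * s i) • a i) (∑ i, (lam i * s i) • b i) =
    ∑ i : Fin k, ∑ j ∈ Finset.univ.filter (fun j => i < j),
      (lam i * lam j) • Matrix.vecMulVec (s j • a i - s i • a j) (s j • b i - s i • b j) := by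
  ext u v
  have h := stmt9_scalar (fun i => a i u) (fun i => b i v) lam s hs
  simpa [Matrix.sum_apply, Matrix.vecMulVec_apply, Finset.sum_apply] using h
end

section
/- Let A, B be m×n real matrices all of whose entries lie in [0,1], and let M' be an SDP2-feasible solution for the game (A,B), with blocks P = Z^T and last-column vectors x, y. Then ε(x,y) ≤ (1/2) Σ_{i=1}^m Σ_{j=1}^n |P_{ij} − x_i y_j|. -/
open Matrix BigOperators

variable {m n : ℕ}

theorem key_bound_aux (A P : Fin m → Fin n → ℝ) (x : Fin m → ℝ) (y : Fin n → ℝ)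
    (hA : ∀ i j, A i j ∈ Set.Icc (0 : ℝ) 1) (hy : ∑ j, y j = 1)
    (hP : ∀ i, ∑ j, P i j = x i) :
    ∑ i, ∑ j, A i j * P i j - ∑ i, ∑ j, x i * A i j * y j ≤
      (1 / 2) * ∑ i, ∑ j, |P i j - x i * y j| := by
  rw [← Finset.sum_sub_distrib, Finset.mul_sum]
  refine Finset.sum_le_sum fun i _ => ?_
  have h0 : ∑ j, (P i j - x i * y j) = 0 := by
    rw [Finset.sum_sub_distrib, ← Finset.mul_sum, hy, hP]; ring
  have h1 : ∑ j, A i j * P i j - ∑ j, x i * A i j * y j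
      = ∑ j, (A i j - 1 / 2) * (P i j - x i * y j) := by
    have : ∑ j, (A i j - 1 / 2) * (P i j - x i * y j)
      = ∑ j, (A i j * P i j - x i * A i j * y j) - (1 / 2) * ∑ j, (P i j - x i * y j) := by
      rw [Finset.mul_sum, ← Finset.sum_sub_distrib]
      exact Finset.sum_congr rfl fun j _ => by ring
    rw [this, h0, Finset.sum_sub_distrib]; ring
  rw [h1, Finset.mul_sum]
  refine Finset.sum_le_sum fun j _ => ?_
  refine (le_abs_self _).trans ?_
  rw [abs_mul]
  refine mul_le_mul_of_nonneg_right ?_ (abs_nonneg _)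
  have := hA i j
  rw [abs_le]
  constructor <;> linarith [this.1, this.2]

/-- `ε(x,y) ≤ (1/2)‖P − xyᵀ‖_1` for any SDP2-feasible solution of a game
with payoffs in `[0,1]`. -/
theorem stmt10 (hm : 0 < m) (hn : 0 < n) (A B : Matrix (Fin m) (Fin n) ℝ)
    (hA : ∀ i j, A i j ∈ Set.Icc (0 : ℝ) 1) (hB : ∀ i j, B i j ∈ Set.Icc (0 : ℝ) 1)
    (M : Matrix (SDPIdx m n) (SDPIdx m n) ℝ)
    (hfeas : SDP2Feasible A B M) :
    epsNE A B (lastX M) (lastY M) ≤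
      (1 / 2) * ∑ i, ∑ j, |blkP M i j - lastX M i * lastY M j| := by
  haveI : Nonempty (Fin m) := ⟨⟨0, hm⟩⟩
  haveI : Nonempty (Fin n) := ⟨⟨0, hn⟩⟩
  obtain ⟨⟨hpsd, -, -, -, hy, h1, h2⟩, -, hP, -, -, -, -⟩ := hfeas
  have hZ : ∀ i j, blkZ M j i = blkP M i j := fun i j => by
    have := hpsd.1.apply (Sum.inl (Sum.inl i)) (Sum.inl (Sum.inr j))
    simpa [blkZ, blkP] using this
  simp only [hZ] at h1 h2
  refine max_le ?_ ?_
  · refine le_trans ?_ (key_bound_aux A (blkP M) (lastX M) (lastY M) hA hy hP)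
    exact sub_le_sub_right (ciSup_le h1) _
  · refine le_trans ?_ (key_bound_aux B (blkP M) (lastX M) (lastY M) hB hy hP)
    exact sub_le_sub_right (ciSup_le h2) _
end

section
/- Let A, B be m×n real matrices all of whose entries lie in [0,1], and let M' be an SDP2-feasible solution for the game (A,B). Let M denote the upper-left (m+n)×(m+n) block of M' and let λ_max(M) denote the largest eigenvalue of M. Then the vectors x and y from the last column of M' satisfy ε(x,y) ≤ ((m+n)/2) · (Tr(M) − λ_max(M)); that is, (x,y) is an ε-Nash equilibrium with ε at most (m+n)/2 times the sum of all eigenvalues of M except the largest. -/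
open Matrix BigOperators

variable {m n : ℕ}

theorem psd_cs {I : Type*} [Fintype I] {R : Matrix I I ℝ} (hR : R.PosSemidef) (u v : I → ℝ) :
    (u ⬝ᵥ R *ᵥ v) ^ 2 ≤ (u ⬝ᵥ R *ᵥ u) * (v ⬝ᵥ R *ᵥ v) := by
  have hs : v ⬝ᵥ R *ᵥ u = u ⬝ᵥ R *ᵥ v := by
    have h1 : Rᵀ = R := by simpa using hR.isHermitian.eq
    rw [dotProduct_mulVec, ← mulVec_transpose, h1, dotProduct_comm]
  have key : ∀ t : ℝ, 0 ≤ (u ⬝ᵥ R *ᵥ u) * (t * t) + (2 * (u ⬝ᵥ R *ᵥ v)) * t + (v ⬝ᵥ R *ᵥ v) := by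
    intro t
    have := hR.dotProduct_mulVec_nonneg (t • u + v)
    simp only [star_trivial, mulVec_add, mulVec_smul, add_dotProduct, dotProduct_add,
      smul_dotProduct, dotProduct_smul, smul_eq_mul, hs] at this
    linarith
  have := discrim_le_zero key
  unfold discrim at this
  nlinarith

theorem psd_top {I : Type*} [Fintype I] [DecidableEq I] {M : Matrix I I ℝ} (hH : M.IsHermitian)
    (c : ℝ) (hc : ∀ i, hH.eigenvalues i ≤ c) : (c • (1 : Matrix I I ℝ) - M).PosSemidef := by
  have e : c • (1 : Matrix I I ℝ) - M = (hH.eigenvectorUnitary : Matrix I I ℝ) *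
      diagonal (fun i => c - hH.eigenvalues i) * (hH.eigenvectorUnitary : Matrix I I ℝ)ᴴ := by
    have h1 := hH.spectral_theorem
    rw [Unitary.conjStarAlgAut_apply] at h1
    have h2 : diagonal (fun i => c - hH.eigenvalues i) =
      c • (1 : Matrix I I ℝ) - diagonal (RCLike.ofReal ∘ hH.eigenvalues) := by
      rw [smul_one_eq_diagonal, diagonal_sub]; rfl
    rw [h2, mul_sub, sub_mul]
    have h3 : (hH.eigenvectorUnitary : Matrix I I ℝ) * (hH.eigenvectorUnitary : Matrix I I ℝ)ᴴ = 1 :=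
      Unitary.coe_mul_star_self _
    conv_lhs => rw [h1]
    rw [mul_smul_comm, smul_mul_assoc, mul_one, h3]
    rfl
  rw [e]
  apply PosSemidef.mul_mul_conjTranspose_same
  apply PosSemidef.diagonal
  intro i
  simpa using hc i

theorem perron {I : Type*} [Fintype I] [DecidableEq I] [Nonempty I] {M : Matrix I I ℝ}
    (hM : M.PosSemidef)
    (hnn : ∀ i j, 0 ≤ M i j) (hH : M.IsHermitian) :
    ∃ v : I → ℝ, (∀ i, 0 ≤ v i) ∧ ∑ i, v i * v i = 1 ∧ 0 ≤ (⨆ i, hH.eigenvalues i) ∧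
      (M - (⨆ i, hH.eigenvalues i) • vecMulVec v v).PosSemidef := by
  set c := ⨆ i, hH.eigenvalues i with hcdef
  obtain ⟨i0, hi0⟩ := exists_eq_ciSup_of_finite (f := hH.eigenvalues)
  have hc : ∀ i, hH.eigenvalues i ≤ c := fun i => le_ciSup (Set.finite_range _).bddAbove i
  have hT := psd_top hH c hc
  have hc0 : 0 ≤ c := by rw [hcdef, ← hi0]; exact hM.eigenvalues_nonneg i0
  set e : I → ℝ := ⇑(hH.eigenvectorBasis i0) with he
  have hMe : M *ᵥ e = c • e := by rw [hH.mulVec_eigenvectorBasis, hi0]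
  have hee : ∑ i, e i * e i = 1 := by
    have h := hH.eigenvectorBasis.orthonormal.1 i0
    rw [EuclideanSpace.norm_eq, Real.sqrt_eq_one] at h
    rw [← h]
    refine Finset.sum_congr rfl fun i _ => ?_
    rw [Real.norm_eq_abs, sq_abs, sq]
  let v : I → ℝ := fun i => |e i|
  have hvv : v ⬝ᵥ v = 1 := by
    rw [← hee]
    refine Finset.sum_congr rfl fun i _ => ?_
    simp [v]
  have hq : c ≤ v ⬝ᵥ M *ᵥ v := by
    have h1 : e ⬝ᵥ M *ᵥ e = c := by
      rw [hMe, dotProduct_smul, smul_eq_mul]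
      have : e ⬝ᵥ e = 1 := hee
      rw [this, mul_one]
    rw [← h1]
    simp only [dotProduct, mulVec, Finset.mul_sum]
    refine Finset.sum_le_sum fun i _ => Finset.sum_le_sum fun j _ => ?_
    calc e i * (M i j * e j) ≤ |e i * (M i j * e j)| := le_abs_self _
      _ = v i * (M i j * v j) := by simp [v, abs_mul, abs_of_nonneg (hnn i j)]
  have hz : (c • (1 : Matrix I I ℝ) - M) *ᵥ v = 0 := by
    rw [← hT.dotProduct_mulVec_zero_iff]
    apply le_antisymm _ (hT.dotProduct_mulVec_nonneg v)
    rw [star_trivial, sub_mulVec, smul_mulVec, one_mulVec, dotProduct_sub, dotProduct_smul, hvv]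
    simpa using hq
  have hMv : M *ᵥ v = c • v := by
    rw [sub_mulVec, smul_mulVec, one_mulVec, sub_eq_zero] at hz
    exact hz.symm
  refine ⟨v, fun i => abs_nonneg _, hvv, hc0, ?_⟩
  have hMt : Mᵀ = M := by simpa using hH.eq
  refine PosSemidef.of_dotProduct_mulVec_nonneg ?_ ?_
  · ext i j
    have : M j i = M i j := congrFun (congrFun hMt i) j
    simp [vecMulVec_apply, this, mul_comm (v i)]
  · intro u
    have h := hM.dotProduct_mulVec_nonneg (u - (v ⬝ᵥ u) • v)
    have hvu : v ⬝ᵥ M *ᵥ u = c * (v ⬝ᵥ u) := by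
      rw [dotProduct_mulVec, ← mulVec_transpose, hMt, hMv, smul_dotProduct, smul_eq_mul]
    simp only [star_trivial, mulVec_sub, mulVec_smul, hMv, sub_dotProduct, dotProduct_sub,
      smul_dotProduct, dotProduct_smul, smul_eq_mul, hvv, hvu] at h
    rw [dotProduct_comm u v] at h
    rw [star_trivial, sub_mulVec, smul_mulVec, vecMulVec_mulVec, dotProduct_sub, dotProduct_smul]
    simp only [op_smul_eq_smul, dotProduct_smul, smul_eq_mul]
    rw [dotProduct_comm u v]
    linarith

theorem scal_half {a d : ℝ} (h0 : 0 ≤ a) (h1 : a ≤ 1) : a * d ≤ |d| / 2 + d / 2 := by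
  rcases abs_cases d with ⟨h, h'⟩ | ⟨h, h'⟩ <;> rw [h] <;> nlinarith

set_option maxHeartbeats 1000000 in
theorem core_bound {m n : ℕ} (N : Matrix (Fin m ⊕ Fin n) (Fin m ⊕ Fin n) ℝ) (c : ℝ) (hc : 0 ≤ c)
    (v : Fin m ⊕ Fin n → ℝ) (hv : ∀ k, 0 ≤ v k) (hvv : ∑ k, v k * v k = 1)
    (hR : (N - c • vecMulVec v v).PosSemidef)
    (x : Fin m → ℝ) (y : Fin n → ℝ) (hx1 : ∑ i, x i = 1) (hy1 : ∑ j, y j = 1)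
    (hX : ∀ i, ∑ j, N (Sum.inl i) (Sum.inl j) = x i)
    (hP : ∀ i, ∑ j, N (Sum.inl i) (Sum.inr j) = x i)
    (hY : ∀ i, ∑ j, N (Sum.inr i) (Sum.inr j) = y i)
    (hZ : ∀ i, ∑ j, N (Sum.inr i) (Sum.inl j) = y i)
    (C : Fin m → Fin n → ℝ) (hC : ∀ i j, 0 ≤ C i j ∧ C i j ≤ 1) :
    ∑ i, ∑ j, C i j * (N (Sum.inl i) (Sum.inr j) - x i * y j) ≤
      ((m + n : ℝ) / 2) * (N.trace - c) := by
  set R := N - c • vecMulVec v v with hRdef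
  have hRe : ∀ k l, R k l = N k l - c * (v k * v l) := by
    intro k l; simp [hRdef, vecMulVec_apply]
  have hNe : ∀ k l, N k l = R k l + c * (v k * v l) := by
    intro k l; rw [hRe]; ring
  have hdiag : ∀ k, 0 ≤ R k k := fun k => hR.diag_nonneg
  set t : Fin m ⊕ Fin n → ℝ := fun k => Real.sqrt (R k k) with ht
  have ht0 : ∀ k, 0 ≤ t k := fun k => Real.sqrt_nonneg _
  have ht2 : ∀ k, t k ^ 2 = R k k := fun k => Real.sq_sqrt (hdiag k)
  have hRt : ∀ k l, |R k l| ≤ t k * t l := by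
    intro k l
    have h := psd_cs hR (Pi.single k 1) (Pi.single l 1)
    simp only [single_one_dotProduct, mulVec_single_one, col_apply] at h
    apply abs_le_of_sq_le_sq _ (mul_nonneg (ht0 k) (ht0 l))
    rw [mul_pow, ht2, ht2]; exact h
  obtain ⟨al, hal⟩ : ∃ al, al = ∑ i : Fin m, t (Sum.inl i) := ⟨_, rfl⟩
  obtain ⟨be, hbe⟩ : ∃ be, be = ∑ j : Fin n, t (Sum.inr j) := ⟨_, rfl⟩
  obtain ⟨sa, hsa⟩ : ∃ sa, sa = ∑ i : Fin m, v (Sum.inl i) := ⟨_, rfl⟩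
  obtain ⟨sb, hsb⟩ : ∃ sb, sb = ∑ j : Fin n, v (Sum.inr j) := ⟨_, rfl⟩
  have hal0 : 0 ≤ al := by rw [hal]; exact Finset.sum_nonneg fun i _ => ht0 _
  have hbe0 : 0 ≤ be := by rw [hbe]; exact Finset.sum_nonneg fun i _ => ht0 _
  have hsa0 : 0 ≤ sa := by rw [hsa]; exact Finset.sum_nonneg fun i _ => hv _
  have hsb0 : 0 ≤ sb := by rw [hsb]; exact Finset.sum_nonneg fun i _ => hv _
  have hK : 4 * (al * be) ≤ (m + n : ℝ) * (N.trace - c) := by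
    have h1 : (∑ k, t k) ^ 2 ≤ (m + n : ℝ) * ∑ k, t k ^ 2 := by
      have := sq_sum_le_card_mul_sum_sq (s := Finset.univ) (f := t)
      simpa using this
    have h2 : ∑ k, t k ^ 2 = N.trace - c := by
      simp only [ht2, hRe, Finset.sum_sub_distrib, ← Finset.mul_sum, hvv, mul_one]
      rfl
    have h3 : ∑ k, t k = al + be := by rw [Fintype.sum_sum_type, hal, hbe]
    rw [h2, h3] at h1
    nlinarith [sq_nonneg (al - be)]
  -- sums of R
  set x' : Fin m → ℝ := fun i => ∑ j, R (Sum.inl i) (Sum.inr j) with hx'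
  set y' : Fin n → ℝ := fun j => ∑ i, R (Sum.inr j) (Sum.inl i) with hy'
  have hx'e : ∀ i, x i = x' i + c * v (Sum.inl i) * sb := by
    intro i
    simp only [hx', hRe, Finset.sum_sub_distrib, hP, ← Finset.mul_sum, ← hsb]; ring
  have hy'e : ∀ j, y j = y' j + c * v (Sum.inr j) * sa := by
    intro j
    simp only [hy', hRe, Finset.sum_sub_distrib, hZ, ← Finset.mul_sum, ← hsa]; ring
  have hXs : ∑ i, ∑ j, R (Sum.inl i) (Sum.inl j) = 1 - c * (sa * sa) := by
    simp only [hRe, Finset.sum_sub_distrib, hX, ← Finset.mul_sum, ← hsa, hx1, ← Finset.sum_mul]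
  have hYs : ∑ i, ∑ j, R (Sum.inr i) (Sum.inr j) = 1 - c * (sb * sb) := by
    simp only [hRe, Finset.sum_sub_distrib, hY, ← Finset.mul_sum, ← hsb, hy1, ← Finset.sum_mul]
  have hPs : ∑ i, ∑ j, R (Sum.inl i) (Sum.inr j) = 1 - c * (sa * sb) := by
    simp only [hRe, Finset.sum_sub_distrib, hP, ← Finset.mul_sum, ← hsa, ← hsb, hx1,
      ← Finset.sum_mul]
  have hZs : ∑ i, ∑ j, R (Sum.inr i) (Sum.inl j) = 1 - c * (sa * sb) := by
    simp only [hRe, Finset.sum_sub_distrib, hZ, ← Finset.mul_sum, ← hsa, ← hsb, hy1,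
      ← Finset.sum_mul]
    ring
  have hcs : c * (sa - sb) ^ 2 ≤ 0 := by
    have h := hR.dotProduct_mulVec_nonneg (Sum.elim (fun _ => 1) (fun _ => -1))
    simp only [star_trivial, dotProduct, mulVec, Fintype.sum_sum_type, Sum.elim_inl, Sum.elim_inr,
      mul_one, one_mul, mul_neg, neg_mul, Finset.sum_neg_distrib, Finset.sum_add_distrib, hXs, hYs,
      hPs, hZs] at h
    nlinarith
  have hcase : c = 0 ∨ sa = sb := by
    by_cases h0 : c = 0
    · exact Or.inl h0
    · right
      have hcp : 0 < c := lt_of_le_of_ne hc (Ne.symm h0)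
      have : (sa - sb) ^ 2 = 0 := le_antisymm (by
        by_contra hh
        push Not at hh
        nlinarith [mul_pos hcp hh]) (sq_nonneg _)
      have := pow_eq_zero_iff (two_ne_zero) |>.1 this
      linarith
  obtain ⟨p, hp⟩ : ∃ p, p = c * (sa * sb) := ⟨_, rfl⟩
  have hpa : c * (sa * sa) = p := by rcases hcase with h | h <;> rw [hp, h]; simp
  have hpb : c * (sb * sb) = p := by rcases hcase with h | h <;> rw [hp, h]; simp
  have hp0 : 0 ≤ p := by rw [hp]; positivity
  rw [hpa] at hXs; rw [hpb] at hYs; rw [← hp] at hPs hZs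
  have hRsum : ∑ i : Fin m, ∑ j : Fin n, t (Sum.inl i) * t (Sum.inr j) = al * be := by
    rw [hal, hbe, Finset.sum_mul_sum]
  have hqK : 1 - p ≤ al * be := by
    rw [← hPs, ← hRsum]
    exact Finset.sum_le_sum fun i _ => Finset.sum_le_sum fun j _ => (le_abs_self _).trans (hRt _ _)
  have hq0 : 0 ≤ 1 - p := by
    have h := hR.dotProduct_mulVec_nonneg (Sum.elim (fun _ => 1) (fun _ => 0))
    simp only [star_trivial, dotProduct, mulVec, Fintype.sum_sum_type, Sum.elim_inl, Sum.elim_inr,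
      mul_one, one_mul, mul_zero, zero_mul, Finset.sum_const_zero, add_zero, hXs] at h
    exact h
  obtain ⟨g, hg⟩ : ∃ g, g = Real.sqrt (1 - p) := ⟨_, rfl⟩
  have hg0 : 0 ≤ g := by rw [hg]; exact Real.sqrt_nonneg _
  have hg2 : g ^ 2 = 1 - p := by rw [hg]; exact Real.sq_sqrt hq0
  have hxg : ∀ i, |x' i| ≤ g * t (Sum.inl i) := by
    intro i
    have h := psd_cs hR (Pi.single (Sum.inl i) 1) (Sum.elim (fun _ => 0) (fun _ => 1))
    rw [mulVec_single_one] at h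
    simp only [single_one_dotProduct, col_apply] at h
    simp only [dotProduct, mulVec, Fintype.sum_sum_type, Sum.elim_inl, Sum.elim_inr,
      mul_one, one_mul, mul_zero, zero_mul, Finset.sum_const_zero, zero_add, hYs] at h
    apply abs_le_of_sq_le_sq _ (mul_nonneg hg0 (ht0 _))
    rw [mul_pow, ht2, hg2, mul_comm]; exact h
  have hyg : ∀ j, |y' j| ≤ g * t (Sum.inr j) := by
    intro i
    have h := psd_cs hR (Pi.single (Sum.inr i) 1) (Sum.elim (fun _ => 1) (fun _ => 0))
    rw [mulVec_single_one] at h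
    simp only [single_one_dotProduct, col_apply] at h
    simp only [dotProduct, mulVec, Fintype.sum_sum_type, Sum.elim_inl, Sum.elim_inr,
      mul_one, one_mul, mul_zero, zero_mul, Finset.sum_const_zero, add_zero, hXs] at h
    apply abs_le_of_sq_le_sq _ (mul_nonneg hg0 (ht0 _))
    rw [mul_pow, ht2, hg2, mul_comm]; exact h
  obtain ⟨nx, hnx⟩ : ∃ nx, nx = ∑ i, |x' i| := ⟨_, rfl⟩
  obtain ⟨ny, hny⟩ : ∃ ny, ny = ∑ j, |y' j| := ⟨_, rfl⟩
  have hnx0 : 0 ≤ nx := by rw [hnx]; exact Finset.sum_nonneg fun i _ => abs_nonneg _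
  have hny0 : 0 ≤ ny := by rw [hny]; exact Finset.sum_nonneg fun i _ => abs_nonneg _
  have hnx1 : nx ≤ g * al := by
    rw [hnx, hal, Finset.mul_sum]; exact Finset.sum_le_sum fun i _ => hxg i
  have hny1 : ny ≤ g * be := by
    rw [hny, hbe, Finset.mul_sum]; exact Finset.sum_le_sum fun i _ => hyg i
  have hnx2 : nx ≤ al * be := by
    rw [hnx, ← hRsum]
    exact Finset.sum_le_sum fun i _ => (Finset.abs_sum_le_sum_abs _ _).trans
      (Finset.sum_le_sum fun j _ => hRt _ _)
  have hny2 : ny ≤ al * be := by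
    rw [hny, ← hRsum, Finset.sum_comm]
    exact Finset.sum_le_sum fun i _ => (Finset.abs_sum_le_sum_abs _ _).trans
      (Finset.sum_le_sum fun j _ => (hRt _ _).trans (le_of_eq (mul_comm _ _)))
  have hnxy : nx * ny ≤ (1 - p) * (al * be) := by
    calc nx * ny ≤ (g * al) * (g * be) := mul_le_mul hnx1 hny1 hny0 (by positivity)
      _ = g ^ 2 * (al * be) := by ring
      _ = _ := by rw [hg2]
  have hD : ∀ i j, N (Sum.inl i) (Sum.inr j) - x i * y j =
      R (Sum.inl i) (Sum.inr j) + c * (1 - p) * (v (Sum.inl i) * v (Sum.inr j)) - x' i * y' j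
        - c * sa * (x' i * v (Sum.inr j)) - c * sb * (v (Sum.inl i) * y' j) := by
    intro i j
    rw [hNe, hx'e i, hy'e j, hp]; ring
  have hDabs : ∀ i j, |N (Sum.inl i) (Sum.inr j) - x i * y j| ≤
      t (Sum.inl i) * t (Sum.inr j) + c * (1 - p) * (v (Sum.inl i) * v (Sum.inr j))
        + |x' i| * |y' j|
        + c * sa * (|x' i| * v (Sum.inr j)) + c * sb * (v (Sum.inl i) * |y' j|) := by
    intro i j
    rw [hD]
    have h1 := hRt (Sum.inl i) (Sum.inr j)
    have e2 : |c * (1 - p) * (v (Sum.inl i) * v (Sum.inr j))| =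
        c * (1 - p) * (v (Sum.inl i) * v (Sum.inr j)) :=
      abs_of_nonneg (mul_nonneg (mul_nonneg hc hq0) (mul_nonneg (hv _) (hv _)))
    have e3 : |x' i * y' j| = |x' i| * |y' j| := abs_mul _ _
    have e4 : |c * sa * (x' i * v (Sum.inr j))| = c * sa * (|x' i| * v (Sum.inr j)) := by
      rw [abs_mul, abs_mul (x' i), abs_of_nonneg (hv _), abs_of_nonneg (mul_nonneg hc hsa0)]
    have e5 : |c * sb * (v (Sum.inl i) * y' j)| = c * sb * (v (Sum.inl i) * |y' j|) := by
      rw [abs_mul, abs_mul _ (y' j), abs_of_nonneg (hv _), abs_of_nonneg (mul_nonneg hc hsb0)]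
    rw [← e3, ← e4, ← e5]
    refine (abs_sub _ _).trans (add_le_add ?_ le_rfl)
    refine (abs_sub _ _).trans (add_le_add ?_ le_rfl)
    refine (abs_sub _ _).trans (add_le_add ?_ le_rfl)
    exact (abs_add_le _ _).trans (add_le_add h1 e2.le)
  have hDsum : ∑ i, ∑ j, |N (Sum.inl i) (Sum.inr j) - x i * y j| ≤ 4 * (al * be) := by
    refine (Finset.sum_le_sum fun i _ => Finset.sum_le_sum fun j _ => hDabs i j).trans ?_
    have : ∑ i : Fin m, ∑ j : Fin n,
        (t (Sum.inl i) * t (Sum.inr j) + c * (1 - p) * (v (Sum.inl i) * v (Sum.inr j))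
        + |x' i| * |y' j|
        + c * sa * (|x' i| * v (Sum.inr j)) + c * sb * (v (Sum.inl i) * |y' j|)) =
        al * be + c * (1 - p) * (sa * sb) + nx * ny + c * sa * (nx * sb) + c * sb * (sa * ny) := by
      simp only [Finset.sum_add_distrib, ← Finset.mul_sum, ← Finset.sum_mul, ← hal, ← hbe, ← hsa,
        ← hsb, ← hnx, ← hny]
    rw [this]
    have e : al * be + c * (1 - p) * (sa * sb) + nx * ny + c * sa * (nx * sb) + c * sb * (sa * ny)
      = al * be + p * (1 - p) + nx * ny + p * nx + p * ny := by rw [hp]; ring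
    rw [e]
    have f1 := mul_le_mul_of_nonneg_left hqK hp0
    have f2 := mul_le_mul_of_nonneg_left hnx2 hp0
    have f3 := mul_le_mul_of_nonneg_left hny2 hp0
    have f4 : p * (al * be) ≤ 1 * (al * be) :=
      mul_le_mul_of_nonneg_right (by linarith) (mul_nonneg hal0 hbe0)
    nlinarith
  have hD0 : ∑ i, ∑ j, (N (Sum.inl i) (Sum.inr j) - x i * y j) = 0 := by
    simp only [Finset.sum_sub_distrib, hP, ← Finset.mul_sum, hy1, mul_one, sub_self,
      Finset.sum_const_zero]
  have hfin : ∑ i, ∑ j, C i j * (N (Sum.inl i) (Sum.inr j) - x i * y j) ≤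
      (∑ i, ∑ j, |N (Sum.inl i) (Sum.inr j) - x i * y j|) / 2 +
      (∑ i, ∑ j, (N (Sum.inl i) (Sum.inr j) - x i * y j)) / 2 := by
    simp only [Finset.sum_div, ← Finset.sum_add_distrib]
    refine Finset.sum_le_sum fun i _ => Finset.sum_le_sum fun j _ => ?_
    obtain ⟨h0, h1⟩ := hC i j
    generalize N (Sum.inl i) (Sum.inr j) - x i * y j = d
    exact scal_half h0 h1
  rw [hD0] at hfin
  linarith

/-- `ε(x,y) ≤ ((m+n)/2)·(Tr(M) − λ_max(M))`, i.e. `(m+n)/2` times the sum of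
all eigenvalues of the upper-left block except the largest. -/
theorem stmt11 (hm : 0 < m) (hn : 0 < n) (A B : Matrix (Fin m) (Fin n) ℝ)
    (hA : ∀ i j, A i j ∈ Set.Icc (0 : ℝ) 1) (hB : ∀ i j, B i j ∈ Set.Icc (0 : ℝ) 1)
    (M : Matrix (SDPIdx m n) (SDPIdx m n) ℝ)
    (hfeas : SDP2Feasible A B M)
    (hH : (upperBlock M).IsHermitian) :
    epsNE A B (lastX M) (lastY M) ≤
      ((m + n : ℝ) / 2) * ((upperBlock M).trace - ⨆ i, hH.eigenvalues i) := by
  obtain ⟨⟨hpsd, hnn, -, hx1, hy1, hNA, hNB⟩, hX, hP, hY, hZ, -, -⟩ := hfeas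
  have : Nonempty (Fin m) := ⟨⟨0, hm⟩⟩
  have : Nonempty (Fin n) := ⟨⟨0, hn⟩⟩
  have hU : (upperBlock M).PosSemidef := hpsd.submatrix Sum.inl
  obtain ⟨v, hv, hvv, hc, hR⟩ := perron hU (fun i j => hnn _ _) hH
  have hsym : ∀ i j, blkZ M j i = upperBlock M (Sum.inl i) (Sum.inr j) := by
    intro i j
    have := hpsd.isHermitian.apply (Sum.inl (Sum.inr j)) (Sum.inl (Sum.inl i))
    simpa [blkZ, upperBlock] using this.symm
  have key := core_bound (upperBlock M) _ hc v hv hvv hR (lastX M) (lastY M) hx1 hy1 hX hP hY hZ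
  have split : ∀ C : Matrix (Fin m) (Fin n) ℝ,
      ∑ i, ∑ j, C i j * (upperBlock M (Sum.inl i) (Sum.inr j) - lastX M i * lastY M j) =
      ∑ i, ∑ j, C i j * blkZ M j i - ∑ i, ∑ j, lastX M i * C i j * lastY M j := by
    intro C
    simp only [← Finset.sum_sub_distrib]
    refine Finset.sum_congr rfl fun i _ => Finset.sum_congr rfl fun j _ => ?_
    rw [hsym]; ring
  refine max_le ?_ ?_
  · have h := key A hA
    rw [split] at h
    refine le_trans (sub_le_sub_right (ciSup_le hNA) _) h
  · have h := key B hB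
    rw [split] at h
    refine le_trans (sub_le_sub_right (ciSup_le hNB) _) h
end

section
/- Let A, B be m×n real matrices and let M' be an SDP2-feasible solution for the game (A,B) whose upper-left (m+n)×(m+n) block M has rank 2. Then there exist σ_1, σ_2 ≥ 0 with σ_1 + σ_2 = 1, vectors a, c ∈ Δ_m, and vectors b, d ∈ Δ_n such that M = σ_1 (a,b)(a,b)^T + σ_2 (c,d)(c,d)^T, where (a,b) ∈ ℝ^{m+n} denotes the concatenation of a and b. -/
open Matrix BigOperators

variable {m n : ℕ}

theorem aux_minor {ι : Type*} [Fintype ι] [DecidableEq ι] (N : Matrix ι ι ℝ) (z e : ι → ℝ)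
    (hz : ∀ i, ∑ j, N i j * e j = z i) (hs : ∀ i j, N i j = N j i) (he : ∑ j, e j * z j = 1)
    (hr : N.rank = 2) (i k j : ι) :
    (N i i - z i * z i) * (N k j - z k * z j) = (N k i - z k * z i) * (N i j - z i * z j) := by
  let R := LinearMap.range N.mulVecLin
  have hfr : Module.finrank ℝ R = 2 := hr
  let v : Fin 3 → R := ![⟨N.mulVecLin e, LinearMap.mem_range_self _ _⟩,
    ⟨N.mulVecLin (Pi.single i 1), LinearMap.mem_range_self _ _⟩,
    ⟨N.mulVecLin (Pi.single k 1), LinearMap.mem_range_self _ _⟩]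
  have hnl : ¬ LinearIndependent ℝ v := by
    intro h
    have := h.fintype_card_le_finrank
    rw [hfr] at this
    simp at this
  obtain ⟨g, hg, i0, hi0⟩ := Fintype.not_linearIndependent_iff.1 hnl
  have hg' : ∀ l, g 0 * z l + g 1 * N l i + g 2 * N l k = 0 := by
    intro l
    have h := congrFun (congrArg Subtype.val hg) l
    simp [Fin.sum_univ_three, v, Matrix.mulVec, dotProduct, hz] at h
    linarith
  have hcol : ∀ i, ∑ l, e l * N l i = z i := by
    intro i
    rw [← hz i]
    exact Finset.sum_congr rfl fun l _ => by rw [hs l i, mul_comm]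
  have h0 : g 0 + g 1 * z i + g 2 * z k = 0 := by
    have : ∑ l, e l * (g 0 * z l + g 1 * N l i + g 2 * N l k) = 0 :=
      Finset.sum_eq_zero fun l _ => by rw [hg' l, mul_zero]
    have h2 : ∑ l, e l * (g 0 * z l + g 1 * N l i + g 2 * N l k)
        = g 0 * ∑ l, e l * z l + g 1 * ∑ l, e l * N l i + g 2 * ∑ l, e l * N l k := by
      simp only [Finset.mul_sum, ← Finset.sum_add_distrib]
      exact Finset.sum_congr rfl fun l _ => by ring
    rw [h2, he, hcol, hcol] at this
    linarith
  have hK : ∀ l, g 1 * (N l i - z l * z i) + g 2 * (N l k - z l * z k) = 0 := by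
    intro l
    linear_combination hg' l - z l * h0
  have h1 := hK i
  have h2 := hK j
  rw [hs k j, hs k i, hs i j, mul_comm (z k) (z j), mul_comm (z k) (z i), mul_comm (z i) (z j)]
  by_cases hg1 : g 1 = 0
  · by_cases hg2 : g 2 = 0
    · have hg0 : g 0 = 0 := by simpa [hg1, hg2] using h0
      exact absurd (by fin_cases i0 <;> assumption) hi0
    · apply mul_left_cancel₀ hg2
      linear_combination (N i i - z i * z i) * h2 - (N j i - z j * z i) * h1
  · apply mul_left_cancel₀ hg1
    linear_combination (N j k - z j * z k) * h1 - (N i k - z i * z k) * h2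

theorem aux_w {ι : Type*} [Fintype ι] [DecidableEq ι] (N : Matrix ι ι ℝ) (z e f : ι → ℝ)
    (hz : ∀ i, ∑ j, N i j * e j = z i) (hzf : ∀ i, ∑ j, N i j * f j = z i)
    (hs : ∀ i j, N i j = N j i) (he : ∑ j, e j * z j = 1) (hf : ∑ j, f j * z j = 1)
    (hd : ∀ i, 0 ≤ N i i - z i * z i)
    (hr : N.rank = 2) :
    ∃ w : ι → ℝ, ∑ j, w j * e j = 0 ∧ ∑ j, w j * f j = 0 ∧
      ∀ i j, N i j = z i * z j + w i * w j := by
  have hm := aux_minor N z e hz hs he hr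
  by_cases h : ∀ i, N i i - z i * z i = 0
  · refine ⟨0, by simp, by simp, fun i j => ?_⟩
    have h1 := hm i j i
    have h2 := hm i j j
    rw [h i, hs j i, mul_comm (z j) (z i)] at h2
    have : N i j - z i * z j = 0 := by
      apply mul_self_eq_zero.1
      linarith
    simp
    linarith
  · push Not at h
    obtain ⟨i, hi⟩ := h
    have hpos : 0 < N i i - z i * z i := lt_of_le_of_ne (hd i) (Ne.symm hi)
    set s := Real.sqrt (N i i - z i * z i) with hsdef
    have hs0 : 0 < s := Real.sqrt_pos.2 hpos
    have hss : s * s = N i i - z i * z i := Real.mul_self_sqrt hpos.le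
    have key : ∀ u : ι → ℝ, (∑ j, N i j * u j = z i) → (∑ j, u j * z j = 1) →
        ∑ j, (N i j - z i * z j) / s * u j = 0 := by
      intro u h1 h2
      have : ∑ j, (N i j - z i * z j) / s * u j
          = (∑ j, N i j * u j - z i * ∑ j, u j * z j) / s := by
        rw [Finset.mul_sum, ← Finset.sum_sub_distrib, Finset.sum_div]
        exact Finset.sum_congr rfl fun j _ => by ring
      rw [this, h1, h2]
      simp
    refine ⟨fun j => (N i j - z i * z j) / s, key e (hz i) he, key f (hzf i) hf, fun k j => ?_⟩
    have := hm i k j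
    rw [hs k i] at this
    have h3 : (N i k - z i * z k) / s * ((N i j - z i * z j) / s) = N k j - z k * z j := by
      rw [div_mul_div_comm, hss, div_eq_iff hi]
      linarith
    simp only [h3]
    ring

theorem aux_alpha {ι : Type*} [Fintype ι] (z w : ι → ℝ) (hz : ∀ i, 0 ≤ z i)
    (hzw : ∀ i, z i = 0 → w i = 0) (hsum : ∑ j, w j = 0)
    (hn : ∀ i j, 0 ≤ z i * z j + w i * w j) :
    (∀ i, w i = 0) ∨ ∃ α : ℝ, 0 < α ∧ ∀ i, w i ≤ α * z i ∧ 0 ≤ z i + α * w i := by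
  rcases isEmpty_or_nonempty ι with hι | hι
  · left; intro i; exact hι.elim i
  obtain ⟨i0, hi0⟩ := Finite.exists_max (fun i => w i / z i)
  have hw : ∀ i, w i = w i / z i * z i := by
    intro i
    by_cases h : z i = 0
    · simp [h, hzw i h]
    · field_simp
  by_cases hα : 0 < w i0 / z i0
  · right
    refine ⟨w i0 / z i0, hα, fun i => ⟨?_, ?_⟩⟩
    · rw [hw i]
      exact mul_le_mul_of_nonneg_right (hi0 i) (hz i)
    · have hzp : 0 < z i0 := lt_of_le_of_ne (hz i0) (fun h => by simp [← h] at hα)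
      have := div_nonneg (hn i0 i) hzp.le
      have h2 : (z i0 * z i + w i0 * w i) / z i0 = z i + w i0 / z i0 * w i := by
        field_simp
      rwa [h2] at this
  · left
    have hle : ∀ i, w i ≤ 0 := by
      intro i
      rw [hw i]
      exact mul_nonpos_of_nonpos_of_nonneg ((hi0 i).trans (not_lt.1 hα)) (hz i)
    intro i
    exact (Finset.sum_eq_zero_iff_of_nonpos (fun i _ => hle i)).1 hsum i (Finset.mem_univ i)

/-- a rank-2 SDP2-feasible solution admits a completely positive decomposition
into two simplex-vector pairs. -/
theorem stmt12 (A B : Matrix (Fin m) (Fin n) ℝ)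
    (M : Matrix (SDPIdx m n) (SDPIdx m n) ℝ)
    (hfeas : SDP2Feasible A B M)
    (hrank : (upperBlock M).rank = 2) :
    ∃ (σ₁ σ₂ : ℝ) (a c : Fin m → ℝ) (b d : Fin n → ℝ),
      0 ≤ σ₁ ∧ 0 ≤ σ₂ ∧ σ₁ + σ₂ = 1 ∧
      InSimplex a ∧ InSimplex c ∧ InSimplex b ∧ InSimplex d ∧
      upperBlock M =
        σ₁ • Matrix.vecMulVec (Sum.elim a b) (Sum.elim a b) +
        σ₂ • Matrix.vecMulVec (Sum.elim c d) (Sum.elim c d) := by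
  obtain ⟨⟨hpsd, hnn, h11, hx, hy, -, -⟩, hX, hP, hY, hZ, -, -⟩ := hfeas
  have hsymM : ∀ a b, M a b = M b a := fun a b => by
    have := hpsd.isHermitian.apply b a
    simpa using this
  set z : Fin m ⊕ Fin n → ℝ := fun i => M (Sum.inl i) (Sum.inr ()) with hzdef
  have hz0 : ∀ i, 0 ≤ z i := fun i => hnn _ _
  have hd : ∀ i, 0 ≤ upperBlock M i i - z i * z i := by
    intro i
    have := (hpsd.submatrix (![Sum.inl i, Sum.inr ()] : Fin 2 → SDPIdx m n)).det_nonneg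
    rw [Matrix.det_fin_two] at this
    simp only [Matrix.submatrix_apply, Matrix.cons_val_zero, Matrix.cons_val_one, h11] at this
    rw [hsymM (Sum.inr ()) (Sum.inl i)] at this
    simpa [upperBlock, hzdef] using this
  have hze : ∀ i, ∑ j, upperBlock M i j * (Sum.elim (fun _ => 1) (fun _ => 0) : _ → ℝ) j = z i := by
    rintro (i | i)
    · simpa [upperBlock, blkX, blkY, blkZ, blkP, lastX, lastY, hzdef] using hX i
    · simpa [upperBlock, blkX, blkY, blkZ, blkP, lastX, lastY, hzdef] using hZ i
  have hzf : ∀ i, ∑ j, upperBlock M i j * (Sum.elim (fun _ => 0) (fun _ => 1) : _ → ℝ) j = z i := by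
    rintro (i | i)
    · simpa [upperBlock, blkX, blkY, blkZ, blkP, lastX, lastY, hzdef] using hP i
    · simpa [upperBlock, blkX, blkY, blkZ, blkP, lastX, lastY, hzdef] using hY i
  obtain ⟨w, hwe, hwf, hN⟩ := aux_w (upperBlock M) z _ _ hze hzf (fun i j => hsymM _ _)
    (by simpa [lastX, hzdef] using hx) (by simpa [lastY, hzdef] using hy) hd hrank
  simp only [Fintype.sum_sum_type, Sum.elim_inl, Sum.elim_inr, mul_one, mul_zero,
    Finset.sum_const_zero, add_zero, zero_add] at hwe hwf
  have hnN : ∀ i j, 0 ≤ z i * z j + w i * w j := fun i j => by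
    rw [← hN i j]; exact hnn _ _
  have hzw : ∀ i, z i = 0 → w i = 0 := by
    have key : ∀ i, z i = 0 → upperBlock M i i = 0 := by
      rintro (i | i) h
      · have h2 := (hX i).trans h
        exact (Finset.sum_eq_zero_iff_of_nonneg (fun j _ => hnn _ _)).1 h2 i (Finset.mem_univ i)
      · have h2 := (hY i).trans h
        exact (Finset.sum_eq_zero_iff_of_nonneg (fun j _ => hnn _ _)).1 h2 i (Finset.mem_univ i)
    intro i h
    have h2 := hN i i
    rw [key i h, h] at h2
    apply mul_self_eq_zero.1
    linarith
  have hx' : ∑ i, z (Sum.inl i) = 1 := hx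
  have hy' : ∑ i, z (Sum.inr i) = 1 := hy
  have hel : ∀ u : Fin m ⊕ Fin n → ℝ,
      Sum.elim (fun i => u (Sum.inl i)) (fun i => u (Sum.inr i)) = u := by
    intro u; ext (i | i) <;> rfl
  suffices H : ∃ (σ₁ σ₂ s t : ℝ), 0 ≤ σ₁ ∧ 0 ≤ σ₂ ∧ σ₁ + σ₂ = 1 ∧
      (∀ i, 0 ≤ z i + s * w i) ∧ (∀ i, 0 ≤ z i + t * w i) ∧
      ∀ i j, z i * z j + w i * w j = σ₁ * ((z i + s * w i) * (z j + s * w j))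
        + σ₂ * ((z i + t * w i) * (z j + t * w j)) by
    obtain ⟨σ₁, σ₂, s, t, h1, h2, h3, h4, h5, h6⟩ := H
    refine ⟨σ₁, σ₂, fun i => z (Sum.inl i) + s * w (Sum.inl i),
      fun i => z (Sum.inl i) + t * w (Sum.inl i), fun i => z (Sum.inr i) + s * w (Sum.inr i),
      fun i => z (Sum.inr i) + t * w (Sum.inr i), h1, h2, h3, ⟨fun i => h4 _, ?_⟩,
      ⟨fun i => h5 _, ?_⟩, ⟨fun i => h4 _, ?_⟩, ⟨fun i => h5 _, ?_⟩, ?_⟩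
    · rw [Finset.sum_add_distrib, ← Finset.mul_sum, hwe, hx']; simp
    · rw [Finset.sum_add_distrib, ← Finset.mul_sum, hwe, hx']; simp
    · rw [Finset.sum_add_distrib, ← Finset.mul_sum, hwf, hy']; simp
    · rw [Finset.sum_add_distrib, ← Finset.mul_sum, hwf, hy']; simp
    · rw [hel (fun i => z i + s * w i), hel (fun i => z i + t * w i)]
      ext i j
      rw [hN i j, h6 i j]
      simp [Matrix.vecMulVec_apply]
  rcases aux_alpha z w hz0 hzw (by rw [Fintype.sum_sum_type, hwe, hwf, add_zero]) hnN with
    h | ⟨α, hα, h⟩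
  · refine ⟨1, 0, 0, 0, by norm_num, by norm_num, by norm_num, ?_, ?_, ?_⟩
    · intro i; simpa using hz0 i
    · intro i; simpa using hz0 i
    · intro i j; simp [h]
  · refine ⟨α⁻¹ / (α + α⁻¹), α / (α + α⁻¹), α, -α⁻¹, by positivity, by positivity, ?_,
      fun i => (h i).2, ?_, ?_⟩
    · have : α + α⁻¹ ≠ 0 := by positivity
      rw [← add_div, add_comm, div_self this]
    · intro i
      have h1 : α⁻¹ * w i ≤ α⁻¹ * (α * z i) :=
        mul_le_mul_of_nonneg_left (h i).1 (by positivity)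
      rw [inv_mul_cancel_left₀ hα.ne'] at h1
      linarith
    · intro i j
      have : α + α⁻¹ ≠ 0 := by positivity
      have h2 : α * α + 1 ≠ 0 := by positivity
      field_simp
      ring
end

section
/- Let A, B be m×n real matrices all of whose entries lie in [0,1], and let M' be an SDP2-feasible solution for the game (A,B) whose upper-left (m+n)×(m+n) block M has rank 2. Then the pair (x,y) from the last column of M' satisfies ε(x,y) ≤ 1/2, i.e., (x,y) is a 1/2-Nash equilibrium. -/
open Matrix BigOperators

variable {m n : ℕ}

theorem aux_abs {k : ℕ} (x p : Fin k → ℝ) (hx : ∑ i, x i = 1) (hp : ∑ i, p i = 0)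
    (h : ∀ i j, 0 ≤ x i * x j + p i * p j) : ∑ i, |p i| ≤ 1 := by
  classical
  have e1 := Finset.sum_filter_add_sum_filter_not Finset.univ (fun i => 0 < p i) x
  have e2 := Finset.sum_filter_add_sum_filter_not Finset.univ (fun i => 0 < p i) p
  have e3 := Finset.sum_filter_add_sum_filter_not Finset.univ (fun i => 0 < p i) (fun i => |p i|)
  have e4 : ∑ i with 0 < p i, |p i| = ∑ i with 0 < p i, p i :=
    Finset.sum_congr rfl fun i hi => abs_of_pos (Finset.mem_filter.1 hi).2
  have e5 : ∑ i with ¬ 0 < p i, |p i| = - ∑ i with ¬ 0 < p i, p i := by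
    rw [← Finset.sum_neg_distrib]
    exact Finset.sum_congr rfl fun i hi => abs_of_nonpos (not_lt.1 (Finset.mem_filter.1 hi).2)
  have e6 : 0 ≤ ∑ i with 0 < p i, ∑ j with ¬ 0 < p j, (x i * x j + p i * p j) :=
    Finset.sum_nonneg fun i _ => Finset.sum_nonneg fun j _ => h i j
  simp only [Finset.sum_add_distrib, ← Finset.sum_mul_sum] at e6
  rw [← e3, e4, e5]
  rw [hx] at e1
  rw [hp] at e2
  generalize ∑ i with 0 < p i, x i = a at *
  generalize ∑ i with ¬ 0 < p i, x i = b at *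
  generalize ∑ i with 0 < p i, p i = s at *
  generalize ∑ i with ¬ 0 < p i, p i = t at *
  obtain rfl : b = 1 - a := by linarith
  obtain rfl : t = -s := by linarith
  nlinarith [sq_nonneg (2 * a - 1), sq_nonneg (2 * s - 1)]

theorem aux_bound (C : Matrix (Fin m) (Fin n) ℝ) (hC : ∀ i j, C i j ∈ Set.Icc (0 : ℝ) 1)
    (p : Fin m → ℝ) (q : Fin n → ℝ) (hp0 : ∑ i, p i = 0)
    (hp : ∑ i, |p i| ≤ 1) (hq : ∑ j, |q j| ≤ 1) :
    ∑ i, ∑ j, C i j * (p i * q j) ≤ 1 / 2 := by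
  have h1 : ∑ i, ∑ j, C i j * (p i * q j) ≤
      ∑ i, ∑ j, ((1/2) * (p i * q j) + (1/2) * (|p i| * |q j|)) := by
    refine Finset.sum_le_sum fun i _ => Finset.sum_le_sum fun j _ => ?_
    rw [← abs_mul]
    obtain ⟨h0, h1⟩ := hC i j
    rcases abs_cases (p i * q j) with ⟨h, h'⟩ | ⟨h, h'⟩ <;> rw [h] <;> nlinarith
  refine h1.trans ?_
  simp only [Finset.sum_add_distrib, ← Finset.mul_sum, ← Finset.sum_mul]
  rw [hp0]
  have := mul_le_one₀ hp (Finset.sum_nonneg fun j _ => abs_nonneg (q j)) hq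
  linarith

theorem aux_decomp {ι : Type*} [Fintype ι] [DecidableEq ι] (G : Matrix ι ι ℝ)
    (hs : ∀ a b, G a b = G b a)
    (e v : ι → ℝ) (hv : G *ᵥ e = v) (hev : e ⬝ᵥ v = 1) (hr : G.rank = 2)
    (hd : ∀ a, v a * v a ≤ G a a) :
    ∃ w : ι → ℝ, ∀ a b, G a b = v a * v b + w a * w b := by
  set N : Matrix ι ι ℝ := G - vecMulVec v v with hN
  have hNu : ∀ u, N *ᵥ u = G *ᵥ (u - (v ⬝ᵥ u) • e) := by
    intro u
    rw [hN, sub_mulVec, mulVec_sub, mulVec_smul, hv]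
    congr 1
    ext a
    simp [vecMulVec, mulVec, dotProduct, Finset.mul_sum, Finset.sum_mul]
    refine Finset.sum_congr rfl fun i _ => by ring
  have hGs : Gᵀ = G := by ext a b; exact hs b a
  have heN : ∀ u, e ⬝ᵥ (N *ᵥ u) = 0 := by
    intro u
    rw [hNu, dotProduct_mulVec, ← mulVec_transpose, hGs, hv, dotProduct_sub, dotProduct_smul,
      dotProduct_comm v e, hev]
    simp
  have hlt : LinearMap.range N.mulVecLin < LinearMap.range G.mulVecLin := by
    refine lt_of_le_of_ne ?_ ?_
    · rintro _ ⟨u, rfl⟩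
      exact ⟨u - (v ⬝ᵥ u) • e, by simp only [mulVecLin_apply]; exact (hNu u).symm⟩
    · intro h
      have : v ∈ LinearMap.range N.mulVecLin := by rw [h]; exact ⟨e, hv⟩
      obtain ⟨u, hu⟩ := this
      have h0 := heN u
      rw [mulVecLin_apply] at hu
      rw [hu, hev] at h0
      exact one_ne_zero h0
  have hf := Submodule.finrank_lt_finrank_of_lt hlt
  have hr' : Module.finrank ℝ (LinearMap.range G.mulVecLin) = 2 := hr
  rw [hr'] at hf
  obtain ⟨⟨w0, hw0⟩, hw⟩ := finrank_le_one_iff.1 (Nat.lt_succ_iff.1 hf)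
  have hc : ∀ b, ∃ c : ℝ, ∀ a, N a b = c * w0 a := by
    intro b
    obtain ⟨c, hc⟩ := hw ⟨N *ᵥ Pi.single b 1, ⟨_, rfl⟩⟩
    refine ⟨c, fun a => ?_⟩
    have := congrFun (congrArg Subtype.val hc) a
    simpa using this.symm
  choose c hc using hc
  have hNe : ∀ a b, N a b = G a b - v a * v b := fun a b => rfl
  have hNs : ∀ a b, N a b = N b a := by
    intro a b; rw [hNe, hNe, hs a b]; ring
  by_cases hz : w0 = 0
  · refine ⟨0, fun a b => ?_⟩
    have := hc b a
    rw [hNe, hz] at this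
    simp at this ⊢
    linarith
  · obtain ⟨a0, ha0⟩ := Function.ne_iff.1 hz
    simp only [Pi.zero_apply] at ha0
    have hk : ∀ b, c b = c a0 / w0 a0 * w0 b := by
      intro b
      have := hNs a0 b
      rw [hc, hc] at this
      field_simp
      linarith
    have hk0 : 0 ≤ c a0 / w0 a0 := by
      have h1 := hd a0
      have h2 := hc a0 a0
      rw [hNe] at h2
      have h3 : 0 ≤ c a0 * w0 a0 := by linarith
      have : c a0 / w0 a0 = c a0 * w0 a0 / (w0 a0)^2 := by field_simp
      rw [this]; positivity
    refine ⟨fun a => Real.sqrt (c a0 / w0 a0) * w0 a, fun a b => ?_⟩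
    have h1 := hc b a
    rw [hNe, hk b] at h1
    have h2 := Real.mul_self_sqrt hk0
    linear_combination h1 - w0 a * w0 b * h2

/-- a rank-2 SDP2-feasible solution yields a `1/2`-Nash equilibrium in its
last column. -/
theorem stmt14 (hm : 0 < m) (hn : 0 < n) (A B : Matrix (Fin m) (Fin n) ℝ)
    (hA : ∀ i j, A i j ∈ Set.Icc (0 : ℝ) 1) (hB : ∀ i j, B i j ∈ Set.Icc (0 : ℝ) 1)
    (M : Matrix (SDPIdx m n) (SDPIdx m n) ℝ)
    (hfeas : SDP2Feasible A B M)
    (hrank : (upperBlock M).rank = 2) :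
    epsNE A B (lastX M) (lastY M) ≤ 1 / 2 := by
  obtain ⟨⟨hpsd, hnn, h11, hx1, hy1, hNA, hNB⟩, hX, hP, hY, hZ, -, -⟩ := hfeas
  haveI : Nonempty (Fin m) := ⟨⟨0, hm⟩⟩
  haveI : Nonempty (Fin n) := ⟨⟨0, hn⟩⟩
  have hsym : ∀ a b, M a b = M b a := fun a b => by
    have := hpsd.1.apply b a
    simpa using this
  obtain ⟨w, hw⟩ := aux_decomp (upperBlock M) (fun a b => hsym _ _)
    (Sum.elim (fun _ => 1) (fun _ => 0)) (Sum.elim (lastX M) (lastY M))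
    (by
      ext a
      rcases a with i | j
      · simpa [mulVec, dotProduct, upperBlock, blkX] using hX i
      · simpa [mulVec, dotProduct, upperBlock, blkZ] using hZ j)
    (by simpa [dotProduct] using hx1) hrank
    (by
      intro a
      have key : M (Sum.inl a) (Sum.inr ()) * M (Sum.inl a) (Sum.inr ()) ≤
          M (Sum.inl a) (Sum.inl a) := by
        have h := hpsd.dotProduct_mulVec_nonneg
          (Pi.single (Sum.inl a) 1 - M (Sum.inl a) (Sum.inr ()) • Pi.single (Sum.inr ()) 1)
        simp [mulVec_sub, mulVec_smul, sub_dotProduct, h11,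
          hsym (Sum.inr ()) (Sum.inl a)] at h
        linarith
      rcases a with i | j
      · exact key
      · exact key)
  set p : Fin m → ℝ := fun i => w (Sum.inl i) with hp
  set q : Fin n → ℝ := fun j => w (Sum.inr j) with hq
  have wX : ∀ i k, blkX M i k = lastX M i * lastX M k + p i * p k := fun i k => hw (.inl i) (.inl k)
  have wY : ∀ i k, blkY M i k = lastY M i * lastY M k + q i * q k := fun i k => hw (.inr i) (.inr k)
  have wZ : ∀ j i, blkZ M j i = lastX M i * lastY M j + p i * q j := fun j i => by
    have : blkZ M j i = lastY M j * lastX M i + q j * p i := hw (.inr j) (.inl i)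
    linarith
  have p0 : ∑ i, p i = 0 := by
    have h : ∀ i, p i * ∑ k, p k = 0 := fun i => by
      have := hX i
      simp only [wX, Finset.sum_add_distrib, ← Finset.mul_sum, hx1] at this
      linarith
    have h2 : (∑ i, p i) * ∑ k, p k = 0 := by
      rw [Finset.sum_mul]; exact Finset.sum_eq_zero fun i _ => h i
    exact mul_self_eq_zero.1 h2
  have q0 : ∑ i, q i = 0 := by
    have h : ∀ i, q i * ∑ k, q k = 0 := fun i => by
      have := hY i
      simp only [wY, Finset.sum_add_distrib, ← Finset.mul_sum, hy1] at this
      linarith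
    have h2 : (∑ i, q i) * ∑ k, q k = 0 := by
      rw [Finset.sum_mul]; exact Finset.sum_eq_zero fun i _ => h i
    exact mul_self_eq_zero.1 h2
  have pa : ∑ i, |p i| ≤ 1 := aux_abs (lastX M) p hx1 p0 fun i k => by
    rw [← wX]; exact hnn _ _
  have qa : ∑ i, |q i| ≤ 1 := aux_abs (lastY M) q hy1 q0 fun i k => by
    rw [← wY]; exact hnn _ _
  have fin : ∀ C : Matrix (Fin m) (Fin n) ℝ, (∀ i j, C i j ∈ Set.Icc (0 : ℝ) 1) →
      ∑ i, ∑ j, C i j * blkZ M j i ≤ ∑ i, ∑ j, lastX M i * C i j * lastY M j + 1 / 2 := by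
    intro C hC
    have hb := aux_bound C hC p q p0 pa qa
    have : ∑ i, ∑ j, C i j * blkZ M j i = ∑ i, ∑ j, lastX M i * C i j * lastY M j +
        ∑ i, ∑ j, C i j * (p i * q j) := by
      simp only [← Finset.sum_add_distrib]
      refine Finset.sum_congr rfl fun i _ => Finset.sum_congr rfl fun j _ => ?_
      rw [wZ]; ring
    linarith
  unfold epsNE epsA epsB
  refine max_le ?_ ?_
  · have := ciSup_le (fun i => (hNA i).trans (fin A hA))
    linarith
  · have := ciSup_le (fun j => (hNB j).trans (fin B hB))
    linarith
end

section
/- Let A be an n×n real matrix with entries in [0,1] and consider the symmetric game (A, A^T). Let M' be an SDP2-feasible solution for the game (A, A^T) that additionally satisfies the symmetry constraints x = y and X = P = Y, and suppose the upper-left 2n×2n block M of M' has rank 2. Then there exists z ∈ Δ_n such that (z,z) is a symmetric 1/3-Nash equilibrium of (A, A^T), i.e., ε(z,z) ≤ 1/3. -/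
open Matrix BigOperators

variable {m n : ℕ}

theorem aux_dep {n : ℕ} (X : Matrix (Fin n) (Fin n) ℝ) (hrk : X.rank ≤ 2)
    (f : Fin 3 → Fin n → ℝ) :
    ∃ g : Fin 3 → ℝ, g ≠ 0 ∧ X *ᵥ (∑ i, g i • f i) = 0 := by
  let F : Fin 3 → LinearMap.range X.mulVecLin := fun i => ⟨X.mulVecLin (f i), ⟨f i, rfl⟩⟩
  have hF : ¬ LinearIndependent ℝ F := by
    intro h
    have h1 := h.fintype_card_le_finrank
    have h2 : Module.finrank ℝ (LinearMap.range X.mulVecLin) ≤ 2 := hrk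
    simp only [Fintype.card_fin] at h1
    omega
  rw [Fintype.not_linearIndependent_iff] at hF
  obtain ⟨g, hg, i, hi⟩ := hF
  refine ⟨g, fun h => hi (by rw [h]; rfl), ?_⟩
  have h3 := congrArg Subtype.val hg
  have h4 : X.mulVecLin (∑ i, g i • f i) = 0 := by
    rw [map_sum]
    simp only [map_smul]
    simpa [F] using h3
  exact h4

theorem aux_b {n : ℕ} (X : Matrix (Fin n) (Fin n) ℝ) (x : Fin n → ℝ)
    (hsym : ∀ k l, X k l = X l k)
    (hrow : ∀ k, ∑ l, X k l = x k) (hsum : ∑ k, x k = 1)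
    (hq : ∀ i k s t, 0 ≤ s ^ 2 * X i i + 2 * s * t * X i k + t ^ 2 * X k k
      - (s * x i + t * x k) ^ 2)
    (hrk : X.rank ≤ 2) :
    ∃ b : Fin n → ℝ, ∀ k l, X k l = x k * x l + b k * b l := by
  have hdiag : ∀ i, 0 ≤ X i i - x i * x i := by
    intro i
    have := hq i i 1 0
    nlinarith
  by_cases hz : ∀ i, X i i - x i * x i = 0
  · refine ⟨0, fun k l => ?_⟩
    have h1 := hq k l 1 1
    have h2 := hq k l 1 (-1)
    have h3 := hz k
    have h4 := hz l
    simp only [Pi.zero_apply]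
    nlinarith
  · push Not at hz
    obtain ⟨i, hi⟩ := hz
    have hpos : 0 < X i i - x i * x i := lt_of_le_of_ne (hdiag i) (Ne.symm hi)
    set w := X i i - x i * x i with hw
    have key : ∀ k l, w * (X k l - x k * x l) = (X k i - x k * x i) * (X l i - x l * x i) := by
      intro k l
      obtain ⟨g, hg0, hg⟩ := aux_dep X hrk
        ![fun _ => 1, Pi.single i 1, w • Pi.single k 1 - (X k i - x k * x i) • Pi.single i 1]
      simp only [Fin.sum_univ_three, Matrix.mulVec_add, Matrix.mulVec_smul, Matrix.mulVec_sub,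
        Matrix.cons_val_zero, Matrix.cons_val_one, Matrix.cons_val] at hg
      have hr : ∀ r, g 0 * x r + g 1 * X r i + g 2 * (w * X r k - (X k i - x k * x i) * X r i) = 0 := by
        intro r
        have := congrFun hg r
        simp only [Pi.add_apply, Pi.smul_apply, Pi.sub_apply, smul_eq_mul, Pi.zero_apply,
          Matrix.mulVec_single_one, Matrix.col_apply] at this
        have h1 : (X *ᵥ fun _ => (1:ℝ)) r = x r := by
          rw [← hrow r]; simp [Matrix.mulVec, dotProduct]
        rw [h1] at this
        exact this
      have hcol : ∀ c, ∑ r, X r c = x c := by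
        intro c; rw [← hrow c]; exact Finset.sum_congr rfl fun r _ => hsym r c
      have hs : g 0 + g 1 * x i + g 2 * (w * x k - (X k i - x k * x i) * x i) = 0 := by
        have : ∑ r, (g 0 * x r + g 1 * X r i + g 2 * (w * X r k - (X k i - x k * x i) * X r i)) = 0 :=
          Finset.sum_eq_zero fun r _ => hr r
        simpa only [Finset.sum_add_distrib, ← Finset.mul_sum, Finset.sum_sub_distrib, hcol, hsum,
          mul_one] using this
      have hW : ∀ r, g 1 * (X r i - x r * x i) + g 2 * (w * (X r k - x r * x k)
          - (X k i - x k * x i) * (X r i - x r * x i)) = 0 := by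
        intro r
        linear_combination hr r - x r * hs
      have h1 : g 1 = 0 := by
        have := hW i
        rw [hsym i k] at this
        have h : g 1 * w = 0 := by rw [hw] at this ⊢; linear_combination this
        rcases mul_eq_zero.1 h with h | h
        · exact h
        · exact absurd h hpos.ne'
      have h2 : g 2 ≠ 0 := by
        intro h2
        apply hg0
        have h0 : g 0 = 0 := by rw [h1, h2] at hs; linarith
        funext j
        fin_cases j <;> simp [h0, h1, h2]
      have := hW l
      rw [h1, zero_mul, zero_add] at this
      have := (mul_eq_zero.1 this).resolve_left h2
      rw [hsym k l]
      linear_combination this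
    refine ⟨fun k => (X k i - x k * x i) / √w, fun k l => ?_⟩
    have hsq : √w * √w = w := Real.mul_self_sqrt hpos.le
    have : (X k i - x k * x i) / √w * ((X l i - x l * x i) / √w) = X k l - x k * x l := by
      rw [div_mul_div_comm, hsq, ← key k l, mul_div_cancel_left₀ _ hpos.ne']
    rw [this]; ring

theorem aux_pq {n : ℕ} (X : Matrix (Fin n) (Fin n) ℝ) (x : Fin n → ℝ)
    (hnn : ∀ k l, 0 ≤ X k l)
    (hrow : ∀ k, ∑ l, X k l = x k) (hsum : ∑ k, x k = 1)
    (b : Fin n → ℝ) (hb : ∀ k l, X k l = x k * x l + b k * b l) :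
    ∃ (p q : Fin n → ℝ) (t : ℝ), InSimplex p ∧ InSimplex q ∧ 0 ≤ t ∧ t ≤ 1 ∧
      (∀ k, x k = t * p k + (1 - t) * q k) ∧
      (∀ k l, X k l = t * (p k * p l) + (1 - t) * (q k * q l)) := by
  have hx : ∀ k, 0 ≤ x k := fun k => by
    rw [← hrow k]; exact Finset.sum_nonneg fun l _ => hnn k l
  have hx0 : ∀ k, x k = 0 → b k = 0 := by
    intro k hk
    have h1 : X k k ≤ x k := by
      rw [← hrow k]; exact Finset.single_le_sum (fun l _ => hnn k l) (Finset.mem_univ k)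
    rw [hb k k] at h1
    nlinarith
  have hbs : ∑ l, b l = 0 := by
    have h1 : ∀ k, b k * ∑ l, b l = 0 := by
      intro k
      have h := hrow k
      simp only [hb, Finset.sum_add_distrib, ← Finset.mul_sum, hsum] at h
      linarith
    have h2 : (∑ l, b l) * ∑ l, b l = 0 := by
      rw [Finset.sum_mul]; exact Finset.sum_eq_zero fun k _ => h1 k
    exact mul_self_eq_zero.1 h2
  have hc : ∃ c : ℝ, 0 < c ∧ (∀ k, 0 ≤ x k + c * b k) ∧ ∀ k, b k ≤ c * x k := by
    by_cases hb0 : ∀ k, b k ≤ 0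
    · have hb1 : ∀ k, b k = 0 := fun k =>
        (Finset.sum_eq_zero_iff_of_nonpos fun k _ => hb0 k).1 hbs k (Finset.mem_univ k)
      exact ⟨1, one_pos, fun k => by rw [hb1 k]; linarith [hx k],
        fun k => by rw [hb1 k]; linarith [hx k]⟩
    · push Not at hb0
      obtain ⟨k0, hk0⟩ := hb0
      obtain ⟨j, -, hj⟩ := Finset.exists_max_image Finset.univ (fun k => b k / x k)
        ⟨k0, Finset.mem_univ k0⟩
      have hxp : ∀ k, b k ≠ 0 → 0 < x k := fun k hk =>
        lt_of_le_of_ne (hx k) fun h => hk (hx0 k h.symm)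
      have hcp : 0 < b j / x j :=
        lt_of_lt_of_le (div_pos hk0 (hxp k0 hk0.ne')) (hj k0 (Finset.mem_univ _))
      have hbj : b j ≠ 0 := by
        intro h; rw [h, zero_div] at hcp; exact lt_irrefl _ hcp
      have hxj := hxp j hbj
      refine ⟨b j / x j, hcp, fun k => ?_, fun k => ?_⟩
      · have h := hnn k j
        rw [hb k j] at h
        have h2 : x k + b j / x j * b k = (x k * x j + b k * b j) / x j := by
          field_simp
        rw [h2]; exact div_nonneg h hxj.le
      · by_cases hbk : b k = 0
        · rw [hbk]; exact mul_nonneg hcp.le (hx k)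
        · exact (div_le_iff₀ (hxp k hbk)).1 (hj k (Finset.mem_univ _))
  obtain ⟨c, hc, h1, h2⟩ := hc
  have hc2 : 0 < 1 + c ^ 2 := by positivity
  refine ⟨fun k => x k + c * b k, fun k => x k - b k / c, 1 / (1 + c ^ 2), ⟨h1, ?_⟩, ⟨?_, ?_⟩,
    by positivity, ?_, ?_, ?_⟩
  · rw [Finset.sum_add_distrib, ← Finset.mul_sum, hsum, hbs]; ring
  · intro k
    have : b k / c ≤ x k := by rw [div_le_iff₀ hc]; linarith [h2 k]
    simpa using this
  · rw [Finset.sum_sub_distrib, ← Finset.sum_div, hsum, hbs]; simp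
  · rw [div_le_one hc2]; nlinarith
  · intro k; field_simp; ring
  · intro k l; rw [hb k l]; field_simp; ring

theorem aux_eps {n : ℕ} (hn : 0 < n) (A : Matrix (Fin n) (Fin n) ℝ) (z : Fin n → ℝ)
    (h : ∀ k, ∑ j, A k j * z j - ∑ i, ∑ j, z i * A i j * z j ≤ 1 / 3) :
    epsNE A Aᵀ z z ≤ 1 / 3 := by
  haveI : Nonempty (Fin n) := ⟨⟨0, hn⟩⟩
  have hA : epsA A z z ≤ 1 / 3 := by
    unfold epsA
    have := ciSup_le (f := fun k => ∑ j, A k j * z j)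
      (c := 1 / 3 + ∑ i, ∑ j, z i * A i j * z j) fun k => by linarith [h k]
    linarith
  refine max_le hA ?_
  have : epsB Aᵀ z z = epsA A z z := by
    unfold epsA epsB
    simp only [Matrix.transpose_apply]
    congr 1
    rw [Finset.sum_comm]
    exact Finset.sum_congr rfl fun i _ => Finset.sum_congr rfl fun j _ => by ring
  rw [this]; exact hA

theorem aux_game {n : ℕ} (hn : 0 < n) (A : Matrix (Fin n) (Fin n) ℝ)
    (hA : ∀ i j, A i j ∈ Set.Icc (0 : ℝ) 1) (p q x : Fin n → ℝ) (t : ℝ)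
    (hp : InSimplex p) (hq : InSimplex q) (ht0 : 0 ≤ t) (ht1 : t ≤ 1)
    (hx : ∀ k, x k = t * p k + (1 - t) * q k)
    (hmain : ∀ k, ∑ j, A k j * x j ≤
      ∑ i, ∑ j, A i j * (t * (p i * p j) + (1 - t) * (q i * q j))) :
    ∃ z : Fin n → ℝ, InSimplex z ∧ epsNE A Aᵀ z z ≤ 1 / 3 := by
  have hle : ∀ z : Fin n → ℝ, InSimplex z → ∀ k, ∑ j, A k j * z j ≤ 1 := by
    intro z hz k
    rw [← hz.2]
    exact Finset.sum_le_sum fun j _ => mul_le_of_le_one_left (hz.1 j) (hA k j).2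
  have hnn : ∀ u v : Fin n → ℝ, InSimplex u → InSimplex v →
      0 ≤ ∑ i, ∑ j, u i * A i j * v j := fun u v hu hv =>
    Finset.sum_nonneg fun i _ => Finset.sum_nonneg fun j _ =>
      mul_nonneg (mul_nonneg (hu.1 i) (hA i j).1) (hv.1 j)
  by_cases hP : 2 / 3 ≤ ∑ i, ∑ j, p i * A i j * p j
  · exact ⟨p, hp, aux_eps hn A p fun k => by linarith [hle p hp k]⟩
  by_cases hQ : 2 / 3 ≤ ∑ i, ∑ j, q i * A i j * q j
  · exact ⟨q, hq, aux_eps hn A q fun k => by linarith [hle q hq k]⟩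
  push Not at hP hQ
  refine ⟨x, ⟨fun k => ?_, ?_⟩, aux_eps hn A x fun k => ?_⟩
  · rw [hx]
    exact add_nonneg (mul_nonneg ht0 (hp.1 k)) (mul_nonneg (by linarith) (hq.1 k))
  · simp only [hx, Finset.sum_add_distrib, ← Finset.mul_sum, hp.2, hq.2]; ring
  have e1 : ∑ i, ∑ j, A i j * (t * (p i * p j) + (1 - t) * (q i * q j)) =
      t * (∑ i, ∑ j, p i * A i j * p j) + (1 - t) * (∑ i, ∑ j, q i * A i j * q j) := by
    simp only [Finset.mul_sum, ← Finset.sum_add_distrib]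
    exact Finset.sum_congr rfl fun i _ => Finset.sum_congr rfl fun j _ => by ring
  have e2 : ∑ i, ∑ j, x i * A i j * x j =
      t ^ 2 * (∑ i, ∑ j, p i * A i j * p j) + (1 - t) ^ 2 * (∑ i, ∑ j, q i * A i j * q j)
      + t * (1 - t) * (∑ i, ∑ j, p i * A i j * q j)
      + t * (1 - t) * (∑ i, ∑ j, q i * A i j * p j) := by
    simp only [Finset.mul_sum, ← Finset.sum_add_distrib]
    exact Finset.sum_congr rfl fun i _ => Finset.sum_congr rfl fun j _ => by
      rw [hx i, hx j]; ring
  have h1 := hmain k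
  rw [e1] at h1
  rw [e2]
  have a1 := hnn p q hp hq
  have a2 := hnn q p hq hp
  have a3 := hnn p p hp hp
  have a4 := hnn q q hq hq
  generalize (∑ i, ∑ j, p i * A i j * p j) = P at *
  generalize (∑ i, ∑ j, q i * A i j * q j) = Q at *
  generalize (∑ i, ∑ j, p i * A i j * q j) = R at *
  generalize (∑ i, ∑ j, q i * A i j * p j) = S at *
  have hs : 0 ≤ t * (1 - t) := mul_nonneg ht0 (by linarith)
  have hs4 : t * (1 - t) ≤ 1 / 4 := by nlinarith [sq_nonneg (t - 1 / 2)]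
  have b1 := mul_nonneg hs a1
  have b2 := mul_nonneg hs a2
  have b3 : t * (1 - t) * (P + Q) ≤ 1 / 4 * (4 / 3) :=
    mul_le_mul hs4 (by linarith) (by linarith) (by norm_num)
  nlinarith

/-- for a symmetric game `(A, Aᵀ)`, a rank-2 solution of the symmetrized SDP2
yields a symmetric `1/3`-Nash equilibrium. -/
theorem stmt16 {n : ℕ} (hn : 0 < n) (A : Matrix (Fin n) (Fin n) ℝ)
    (hA : ∀ i j, A i j ∈ Set.Icc (0 : ℝ) 1)
    (M : Matrix (SDPIdx n n) (SDPIdx n n) ℝ)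
    (hfeas : SDP2Feasible A Aᵀ M)
    (hxy : ∀ i, lastX M i = lastY M i)
    (hXP : ∀ i j, blkX M i j = blkP M i j)
    (hPY : ∀ i j, blkP M i j = blkY M i j)
    (hrank : (upperBlock M).rank = 2) :
    ∃ z : Fin n → ℝ, InSimplex z ∧ epsNE A Aᵀ z z ≤ 1 / 3 := by
  obtain ⟨⟨hpsd, hnn, hcorner, hsx, hsy, hN1, hN2⟩, hr1, hr2, hr3, hr4, hc1, hc2⟩ := hfeas
  have hMs : ∀ a b, M a b = M b a := fun a b => by
    have := hpsd.1.apply a b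
    simpa using this.symm
  let X : Matrix (Fin n) (Fin n) ℝ :=
    (upperBlock M).submatrix (Sum.inl : Fin n → Fin n ⊕ Fin n) Sum.inl
  have hXe : ∀ i j, X i j = blkX M i j := fun i j => rfl
  have hrk : X.rank ≤ 2 := by rw [← hrank]; exact Matrix.rank_submatrix_le _ _ _
  have hsym : ∀ k l, X k l = X l k := fun k l => hMs _ _
  have hq : ∀ i k s t, 0 ≤ s ^ 2 * X i i + 2 * s * t * X i k + t ^ 2 * X k k
      - (s * lastX M i + t * lastX M k) ^ 2 := by
    intro i k s t
    have h1 := hpsd.submatrix ![Sum.inl (Sum.inl i), Sum.inl (Sum.inl k), Sum.inr ()]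
    have h2 := h1.dotProduct_mulVec_nonneg ![s, t, -(s * lastX M i + t * lastX M k)]
    have e1 : M (Sum.inl (Sum.inl k)) (Sum.inl (Sum.inl i)) = X i k := hMs _ _
    have e2 : M (Sum.inr ()) (Sum.inl (Sum.inl i)) = lastX M i := hMs _ _
    have e3 : M (Sum.inr ()) (Sum.inl (Sum.inl k)) = lastX M k := hMs _ _
    have e4 : ∀ i k, M (Sum.inl (Sum.inl i)) (Sum.inl (Sum.inl k)) = X i k := fun _ _ => rfl
    have e5 : ∀ i, M (Sum.inl (Sum.inl i)) (Sum.inr ()) = lastX M i := fun _ => rfl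
    simp [Matrix.mulVec, dotProduct, Fin.sum_univ_three, e2, e3, e5, hcorner] at h2
    simp only [e1, e4] at h2
    linarith
  obtain ⟨b, hb⟩ := aux_b X (lastX M) hsym hr1 hsx hq hrk
  obtain ⟨p, q, t, hp, hq', ht0, ht1, hx, hX⟩ :=
    aux_pq X (lastX M) (fun _ _ => hnn _ _) hr1 hsx b hb
  refine aux_game hn A hA p q (lastX M) t hp hq' ht0 ht1 hx fun k => ?_
  have h := hN1 k
  simp only [← hxy] at h
  refine le_trans h (le_of_eq ?_)
  refine Finset.sum_congr rfl fun i _ => Finset.sum_congr rfl fun j _ => ?_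
  rw [← hX i j, hXe, hXP]
  congr 1
  exact hMs _ _
end

section
/- Let A, B be m×n real matrices such that there exist scalars c > 0, e > 0 and d, f ∈ ℝ with cA + dJ = −eB + fJ (J the m×n all-ones matrix), i.e., the game (A,B) is strictly competitive. Suppose M'* is an SDP2-feasible solution for (A,B) that minimizes the trace of the upper-left (m+n)×(m+n) block among all SDP2-feasible solutions, i.e., Tr(M*) ≤ Tr(M) for every SDP2-feasible solution M' with upper-left block M. Then M'* has rank 1. -/
open Matrix BigOperators

variable {m n : ℕ}

theorem slack_aux {k : ℕ} (x g : Fin k → ℝ) (s : ℝ) (hx : ∀ i, 0 ≤ x i) (h1 : ∑ i, x i = 1)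
    (hg : ∀ i, g i ≤ s) (hs : ∑ i, x i * g i = s) (i l : Fin k) : x i * g l ≤ x i * g i := by
  have h0 : ∑ i, x i * (s - g i) = 0 := by
    simp only [mul_sub, Finset.sum_sub_distrib, ← Finset.sum_mul, h1, hs]; ring
  have := (Finset.sum_eq_zero_iff_of_nonneg
    (fun i _ => mul_nonneg (hx i) (sub_nonneg.2 (hg i)))).1 h0 i (Finset.mem_univ i)
  have h2 := mul_le_mul_of_nonneg_left (hg l) (hx i)
  linarith [mul_sub (x i) s (g i)]

theorem avg_aux {k : ℕ} (x g : Fin k → ℝ) (s : ℝ) (hx : ∀ i, 0 ≤ x i) (h1 : ∑ i, x i = 1)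
    (hg : ∀ i, g i ≤ s) : ∑ i, x i * g i ≤ s := by
  calc ∑ i, x i * g i ≤ ∑ i, x i * s :=
        Finset.sum_le_sum fun i _ => mul_le_mul_of_nonneg_left (hg i) (hx i)
    _ = s := by rw [← Finset.sum_mul, h1, one_mul]

theorem zs_aux {A B : Matrix (Fin m) (Fin n) ℝ} {c e r : ℝ}
    (h : ∀ i j, c * A i j + e * B i j = r) (W : Fin m → Fin n → ℝ) (hW : ∑ i, ∑ j, W i j = 1) :
    c * (∑ i, ∑ j, A i j * W i j) + e * (∑ i, ∑ j, B i j * W i j) = r := by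
  have : r = ∑ i, ∑ j, r * W i j := by simp only [← Finset.mul_sum, hW, mul_one]
  rw [this]
  simp only [Finset.mul_sum, ← Finset.sum_add_distrib]
  refine Finset.sum_congr rfl fun i _ => Finset.sum_congr rfl fun j _ => ?_
  rw [← h i j]; ring

theorem feas_aux (A B : Matrix (Fin m) (Fin n) ℝ) (c e r : ℝ) (hc : 0 < c) (he : 0 < e)
    (h : ∀ i j, c * A i j + e * B i j = r)
    (M : Matrix (SDPIdx m n) (SDPIdx m n) ℝ) (hfeas : SDP2Feasible A B M) :
    SDP2Feasible A B (vecMulVec (fun a => M a (Sum.inr ())) (fun a => M a (Sum.inr ()))) := by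
  obtain ⟨⟨hpsd, hnn, h1, hx, hy, hA, hB⟩, -, -, -, hZ, -, -⟩ := hfeas
  have hx0 : ∀ i, 0 ≤ lastX M i := fun i => hnn _ _
  have hy0 : ∀ i, 0 ≤ lastY M i := fun i => hnn _ _
  set x := lastX M with hxd
  set y := lastY M with hyd
  have e1 := zs_aux h (fun i j => blkZ M j i)
    (by rw [Finset.sum_comm]; simp only [hZ, hy])
  have e2 := zs_aux h (fun i j => x i * y j)
    (by simp only [← Finset.mul_sum, hy, mul_one, hx])
  have rA : ∑ i, ∑ j, A i j * (x i * y j) = ∑ i, x i * ∑ j, A i j * y j := by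
    simp only [Finset.mul_sum]
    exact Finset.sum_congr rfl fun i _ => Finset.sum_congr rfl fun j _ => by ring
  have rB : ∑ i, ∑ j, B i j * (x i * y j) = ∑ j, y j * ∑ i, B i j * x i := by
    rw [Finset.sum_comm]
    simp only [Finset.mul_sum]
    exact Finset.sum_congr rfl fun i _ => Finset.sum_congr rfl fun j _ => by ring
  have aA := avg_aux x (fun i => ∑ j, A i j * y j) _ hx0 hx hA
  have aB := avg_aux y (fun j => ∑ i, B i j * x i) _ hy0 hy hB
  rw [rA, rB] at e2
  have eA : ∑ i, x i * ∑ j, A i j * y j = ∑ i', ∑ j, A i' j * blkZ M j i' := by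
    refine le_antisymm aA ?_
    have := mul_le_mul_of_nonneg_left aB he.le
    exact le_of_mul_le_mul_left (by linarith) hc
  have eB : ∑ j, y j * ∑ i, B i j * x i = ∑ i, ∑ j', B i j' * blkZ M j' i := by
    refine le_antisymm aB ?_
    have := mul_le_mul_of_nonneg_left aA hc.le
    exact le_of_mul_le_mul_left (by linarith) he
  have sA := slack_aux x (fun i => ∑ j, A i j * y j) _ hx0 hx hA eA
  have sB := slack_aux y (fun j => ∑ i, B i j * x i) _ hy0 hy hB eB
  have kX : ∀ i, lastX (vecMulVec (fun a => M a (Sum.inr ())) (fun a => M a (Sum.inr ()))) i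
      = x i := fun i => by simp [lastX, vecMulVec_apply, h1, hxd]
  have kY : ∀ i, lastY (vecMulVec (fun a => M a (Sum.inr ())) (fun a => M a (Sum.inr ()))) i
      = y i := fun i => by simp [lastY, vecMulVec_apply, h1, hyd]
  have kbX : ∀ i j, blkX (vecMulVec (fun a => M a (Sum.inr ())) (fun a => M a (Sum.inr ()))) i j
      = x i * x j := fun i j => rfl
  have kbY : ∀ i j, blkY (vecMulVec (fun a => M a (Sum.inr ())) (fun a => M a (Sum.inr ()))) i j
      = y i * y j := fun i j => rfl
  have kbP : ∀ i j, blkP (vecMulVec (fun a => M a (Sum.inr ())) (fun a => M a (Sum.inr ()))) i j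
      = x i * y j := fun i j => rfl
  have kbZ : ∀ i j, blkZ (vecMulVec (fun a => M a (Sum.inr ())) (fun a => M a (Sum.inr ()))) i j
      = x j * y i := fun i j => mul_comm _ _
  refine ⟨⟨?_, ?_, ?_, ?_, ?_, ?_, ?_⟩, ?_, ?_, ?_, ?_, ?_, ?_⟩
  · simpa using posSemidef_vecMulVec_self_star (fun a => M a (Sum.inr ()))
  · intro a b; exact mul_nonneg (hnn _ _) (hnn _ _)
  · simp [vecMulVec_apply, h1]
  · simp only [kX, hx]
  · simp only [kY, hy]
  · intro i; simp only [kY, kbZ]; rw [rA, eA]; exact hA i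
  · intro i; simp only [kX, kbZ]; rw [rB, eB]; exact hB i
  · intro i; simp only [kX, kbX, ← Finset.mul_sum, hx, mul_one]
  · intro i; simp only [kX, kbP, ← Finset.mul_sum, hy, mul_one]
  · intro i; simp only [kY, kbY, ← Finset.mul_sum, hy, mul_one]
  · intro i; simp only [kY, kbZ, ← Finset.sum_mul, hx, one_mul]
  · intro i k
    have := sA i k
    simp only [Finset.mul_sum] at this
    simp only [kbP, mul_left_comm _ (x i)]
    exact this
  · intro i k
    have := sB i k
    simp only [Finset.mul_sum] at this
    simp only [kbP, mul_comm (x _) (y i), mul_left_comm _ (y i)]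
    exact this

theorem schur_aux {ι : Type*} [Fintype ι] [DecidableEq ι] (M : Matrix ι ι ℝ) (hM : M.PosSemidef)
    (o : ι) (h1 : M o o = 1) :
    (M - vecMulVec (fun a => M a o) (fun a => M a o)).PosSemidef := by
  have hs : ∀ a b, M a b = M b a := fun a b => by
    have := hM.1.apply a b
    simpa using this.symm
  have key := hM.conjTranspose_mul_mul_same (1 - vecMulVec (Pi.single o 1) (fun a => M a o))
  convert key using 1
  have hT : (1 - vecMulVec (Pi.single o 1) (fun a => M a o) : Matrix ι ι ℝ)ᴴ
      = 1 - vecMulVec (fun a => M a o) (Pi.single o 1) := by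
    ext a b
    simp [vecMulVec_apply, Matrix.one_apply, eq_comm, mul_comm]
  have h2 : M *ᵥ Pi.single o 1 = fun a => M a o := by ext a; simp
  have h3 : Pi.single o 1 ᵥ* M = fun a => M a o := by ext a; simp [hs o a]
  have h4 : vecMulVec (fun a => M a o) (Pi.single o 1) * vecMulVec (fun a => M a o) (fun a => M a o)
      = vecMulVec (fun a => M a o) (fun a => M a o) := by
    rw [vecMulVec_mul_vecMulVec]; simp [h1]
  rw [hT, Matrix.mul_assoc, Matrix.mul_sub, Matrix.mul_one, mul_vecMulVec, h2, Matrix.sub_mul,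
    Matrix.one_mul, Matrix.mul_sub, h4, vecMulVec_mul, h3]
  simp

/-- for a strictly competitive game, any SDP2-feasible solution minimizing the
trace of the upper-left block among all SDP2-feasible solutions has rank 1. -/
theorem stmt17 (A B : Matrix (Fin m) (Fin n) ℝ) (c d e f : ℝ) (hc : 0 < c) (he : 0 < e)
    (hsc : c • A + d • allOnesM m n = -(e • B) + f • allOnesM m n)
    (M : Matrix (SDPIdx m n) (SDPIdx m n) ℝ)
    (hfeas : SDP2Feasible A B M)
    (hmin : ∀ N : Matrix (SDPIdx m n) (SDPIdx m n) ℝ,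
      SDP2Feasible A B N → (upperBlock M).trace ≤ (upperBlock N).trace) :
    M.rank = 1 := by
  have h : ∀ i j, c * A i j + e * B i j = f - d := fun i j => by
    have := congrFun (congrFun hsc i) j
    simp [allOnesM] at this
    linarith
  have hN := hmin _ (feas_aux A B c e (f - d) hc he h M hfeas)
  have h1 : M (Sum.inr ()) (Sum.inr ()) = 1 := hfeas.1.2.2.1
  have hS := schur_aux M hfeas.1.1 (Sum.inr ()) h1
  have ht : (M - vecMulVec (fun a => M a (Sum.inr ())) (fun a => M a (Sum.inr ()))).trace = 0 := by
    refine le_antisymm ?_ hS.trace_nonneg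
    rw [Matrix.trace, Fintype.sum_sum_type]
    simp only [Matrix.trace, upperBlock, diag_apply, of_apply] at hN
    simp only [diag_apply, Matrix.sub_apply, Finset.sum_sub_distrib, Finset.univ_unique,
      Finset.sum_singleton, vecMulVec_apply, PUnit.default_eq_unit, h1] at hN ⊢
    linarith
  have hM : M = vecMulVec (fun a => M a (Sum.inr ())) (fun a => M a (Sum.inr ())) :=
    sub_eq_zero.1 (hS.trace_eq_zero_iff.1 ht)
  apply le_antisymm
  · rw [hM]; exact rank_vecMulVec_le _ _
  · rw [Nat.one_le_iff_ne_zero]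
    intro h0
    rw [Matrix.rank, Submodule.finrank_eq_zero, LinearMap.range_eq_bot] at h0
    have h5 := congrFun (LinearMap.congr_fun h0 (Pi.single (Sum.inr ()) 1)) (Sum.inr ())
    simp [h1] at h5
end

section
/- Let A, B be m×n real matrices and let M' be an SDP2-feasible solution for the game (A,B), with diagonal blocks X, Y and last-column vectors x, y. Then M' has rank 1 if and only if X_{ii} = x_i^2 for all i ∈ {1,…,m} and Y_{ii} = y_i^2 for all i ∈ {1,…,n}. -/
open Matrix BigOperators

variable {m n : ℕ}

theorem aux_minor_s18 {ι : Type*} [Fintype ι] (M : Matrix ι ι ℝ) (h : M.rank = 1) (a c : ι) :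
    M a a * M c c = M a c * M c a := by
  by_contra hne
  have h1 := rank_submatrix_le M ![a, c] ![a, c]
  have hu : IsUnit (M.submatrix ![a, c] ![a, c]) := by
    rw [Matrix.isUnit_iff_isUnit_det, isUnit_iff_ne_zero, Matrix.det_fin_two]
    simpa [sub_eq_zero] using hne
  rw [rank_of_isUnit _ hu, h] at h1
  simp at h1

theorem aux_col {ι : Type*} [Fintype ι] [DecidableEq ι] (M : Matrix ι ι ℝ) (hM : M.PosSemidef)
    (c : ι) (hc : M c c = 1) (a : ι) (ha : M a a = (M a c) ^ 2) (b : ι) :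
    M b a = M b c * M a c := by
  have hs : M c a = M a c := by simpa using hM.1.apply a c
  have h0 := (hM.dotProduct_mulVec_zero_iff (Pi.single a 1 - M a c • Pi.single c 1)).1 (by
    simp [Matrix.mulVec_sub, Matrix.mulVec_smul, sub_dotProduct, hs, ha, hc]
    ring)
  have h1 := congrFun h0 b
  simp [Matrix.mulVec_sub, Matrix.mulVec_smul] at h1
  linarith

/-- an SDP2-feasible solution has rank 1 iff `X_{ii} = x_i²` and
`Y_{ii} = y_i²` for all `i`. -/
theorem stmt18 (A B : Matrix (Fin m) (Fin n) ℝ)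
    (M : Matrix (SDPIdx m n) (SDPIdx m n) ℝ)
    (hfeas : SDP2Feasible A B M) :
    M.rank = 1 ↔
      ((∀ i : Fin m, blkX M i i = (lastX M i) ^ 2) ∧
       (∀ j : Fin n, blkY M j j = (lastY M j) ^ 2)) := by
  obtain ⟨⟨hM, -, hc, -⟩, -⟩ := hfeas
  have key : ∀ a : Fin m ⊕ Fin n, M.rank = 1 →
      M (Sum.inl a) (Sum.inl a) = (M (Sum.inl a) (Sum.inr ())) ^ 2 := by
    intro a h
    have h1 := aux_minor_s18 M h (Sum.inl a) (Sum.inr ())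
    have hs : M (Sum.inr ()) (Sum.inl a) = M (Sum.inl a) (Sum.inr ()) := by
      simpa using hM.1.apply (Sum.inl a) (Sum.inr ())
    rw [hc, hs] at h1
    linarith
  constructor
  · intro h
    exact ⟨fun i => key _ h, fun j => key _ h⟩
  · rintro ⟨hX, hY⟩
    have hd : ∀ a, M a a = (M a (Sum.inr ())) ^ 2 := by
      rintro ((i | j) | u)
      · exact hX i
      · exact hY j
      · rw [hc]; norm_num
    have hv : M = Matrix.vecMulVec (fun a => M a (Sum.inr ())) (fun a => M a (Sum.inr ())) := by
      ext b a
      exact aux_col M hM _ hc a (hd a) b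
    apply le_antisymm
    · rw [hv]; exact rank_vecMulVec_le _ _
    · have h1 := rank_submatrix_le M (fun _ : Unit => (Sum.inr () : SDPIdx m n))
        (fun _ : Unit => (Sum.inr () : SDPIdx m n))
      have hu : M.submatrix (fun _ : Unit => (Sum.inr () : SDPIdx m n))
          (fun _ : Unit => (Sum.inr () : SDPIdx m n)) = 1 := by
        ext x y
        simp [hc]
      rw [hu, rank_one] at h1
      simpa using h1
end
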